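/- arXiv:1108.3658 — 6 statements merged into one kernel-verified Lean document; each statement's English description precedes it below -/
import Mathlib

section
/- A quasigroup satisfying the Moufang identity $x(y(xz)) = ((xy)x)z$ has a two-sided neutral element, i.e., is a loop. -/
/-!
Write `x⁻¹` for the solution of `(x * x⁻¹) * x = x`. The Moufang identity says that the left
translations satisfy `L x ∘ L y ∘ L x = L ((x * y) * x)`, so `L x⁻¹` is the inverse of `L x`.
It follows that `x⁻¹ * x = x * x⁻¹` and that this element is idempotent.

If `a` and `b` are idempotent, then `L a` is an involution, and therefore
`((a * b) * a) * (a * b) = a * (b * (a * (a * b))) = a * (b * b) = a * b`. Hence `a` is the inverse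
of `a * b`, so that `a * b = a⁻¹ = a = a * a` and `b = a`. The unique idempotent is neutral.
-/

/-- A cancellative magma with the Moufang identity `x(y(xz)) = ((xy)x)z` and a choice of `x⁻¹` with
`(xx⁻¹)x = x`. It abstracts a Moufang quasigroup, where `x⁻¹ = x \ (x / x)`. There is no neutral
element in the structure, so `x⁻¹` is an inverse only in the sense of this equation. -/
class InvMoufangMagma (Q : Type*) extends Mul Q, Inv Q, IsCancelMul Q where
  moufang (x y z : Q) : x * (y * (x * z)) = x * y * x * z
  mul_inv_mul_self (x : Q) : x * x⁻¹ * x = x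

namespace InvMoufangMagma

variable {Q : Type*} [InvMoufangMagma Q]

theorem eq_inv_of_mul_mul_eq {x y : Q} (h : x * y * x = x) : y = x⁻¹ :=
  mul_left_cancel (mul_right_cancel (h.trans (mul_inv_mul_self x).symm))

theorem inv_mul_cancel_left (x z : Q) : x⁻¹ * (x * z) = z := by
  apply mul_left_cancel (a := x)
  rw [moufang, mul_inv_mul_self]

theorem inv_inv (x : Q) : x⁻¹⁻¹ = x := by
  apply mul_right_cancel (b := x)
  calc x⁻¹⁻¹ * x = x⁻¹⁻¹ * (x⁻¹ * (x * x)) := by rw [inv_mul_cancel_left x]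
    _ = x * x := inv_mul_cancel_left _ _

theorem mul_inv_cancel_left (x z : Q) : x * (x⁻¹ * z) = z := by
  simpa only [inv_inv] using inv_mul_cancel_left x⁻¹ z

theorem inv_mul_self_mul_inv (x : Q) : x⁻¹ * x * x⁻¹ = x⁻¹ := by
  simpa only [inv_inv] using mul_inv_mul_self x⁻¹

theorem mul_inv_mul_mul_mul (x y z : Q) : x * (x⁻¹ * y * (x * z)) = y * x * z := by
  rw [moufang, mul_inv_cancel_left]

theorem mul_self_mul_inv_mul_self (x : Q) : x * x * (x⁻¹ * x) = x * x := by
  apply mul_left_cancel (a := x⁻¹)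
  calc x⁻¹ * (x * x * (x⁻¹ * x)) = x * x⁻¹ * x := by
        simpa only [inv_inv] using mul_inv_mul_mul_mul x⁻¹ x x
    _ = x⁻¹ * (x * x) := by rw [mul_inv_mul_self, inv_mul_cancel_left]

theorem inv_mul_self_mul (x : Q) : x⁻¹ * x * x = x := by
  apply mul_left_cancel (a := x)
  calc x * (x⁻¹ * x * x) = x * (x⁻¹ * x * (x * (x⁻¹ * x))) := by rw [mul_inv_cancel_left]
    _ = x * x * (x⁻¹ * x) := mul_inv_mul_mul_mul _ _ _
    _ = x * x := mul_self_mul_inv_mul_self x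

theorem inv_mul_self_eq_mul_inv_self (x : Q) : x⁻¹ * x = x * x⁻¹ :=
  mul_right_cancel ((inv_mul_self_mul x).trans (mul_inv_mul_self x).symm)

theorem isIdempotentElem_inv_mul_self (x : Q) : IsIdempotentElem (x⁻¹ * x) := by
  set e := x⁻¹ * x
  have e_mul : e * x = x := inv_mul_self_mul x
  have mul_e : x * e = x := mul_inv_cancel_left x x
  have e_mul_inv : e * x⁻¹ = x⁻¹ := inv_mul_self_mul_inv x
  have mul_inv : x * x⁻¹ = e := (inv_mul_self_eq_mul_inv_self x).symm
  calc e * e = e * (x * (e * x⁻¹)) := by rw [e_mul_inv, mul_inv]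
    _ = e * x * e * x⁻¹ := moufang _ _ _
    _ = e := by rw [e_mul, mul_e, mul_inv]

theorem inv_eq_self_of_isIdempotentElem {a : Q} (ha : IsIdempotentElem a) : a⁻¹ = a :=
  (eq_inv_of_mul_mul_eq (by rw [ha.eq, ha.eq])).symm

theorem eq_of_isIdempotentElem {a b : Q} (ha : IsIdempotentElem a) (hb : IsIdempotentElem b) :
    a = b := by
  have inv_a : a⁻¹ = a := inv_eq_self_of_isIdempotentElem ha
  have a_involutive : a * (a * b) = b := by
    simpa only [inv_a] using mul_inv_cancel_left a b
  have a_eq_inv : a = (a * b)⁻¹ := by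
    apply eq_inv_of_mul_mul_eq
    rw [← moufang, a_involutive, hb.eq]
  apply mul_left_cancel (a := a)
  calc a * a = a⁻¹ := by rw [ha.eq, inv_a]
    _ = (a * b)⁻¹⁻¹ := congrArg _ a_eq_inv
    _ = a * b := inv_inv _

theorem inv_mul_self_eq_inv_mul_self (x y : Q) : x⁻¹ * x = y⁻¹ * y :=
  eq_of_isIdempotentElem (isIdempotentElem_inv_mul_self x) (isIdempotentElem_inv_mul_self y)

end InvMoufangMagma

open InvMoufangMagma in
theorem moufang_quasigroup_is_loop_M3_general (Q : Type*) [InvMoufangMagma Q] [Nonempty Q] :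
    ∃ e : Q, ∀ x, e * x = x ∧ x * e = x := by
  obtain ⟨q⟩ := ‹Nonempty Q›
  refine ⟨q⁻¹ * q, fun x ↦ ?_⟩
  rw [inv_mul_self_eq_inv_mul_self q x]
  exact ⟨inv_mul_self_mul x, mul_inv_cancel_left x x⟩

theorem moufang_quasigroup_is_loop_M3 (Q : Type*) (mul ld rd : Q → Q → Q)
    (hQ1 : ∀ x y, ld x (mul x y) = y) (hQ2 : ∀ x y, mul x (ld x y) = y)
    (hQ3 : ∀ x y, rd (mul x y) y = x) (hQ4 : ∀ x y, mul (rd x y) y = x)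
    [Nonempty Q]
    (hid : ∀ x y z, mul x (mul y (mul x z)) = mul (mul (mul x y) x) z) :
    ∃ e : Q, ∀ x, mul e x = x ∧ mul x e = x := by
  let _ : InvMoufangMagma Q :=
    { mul := mul
      inv x := ld x (rd x x)
      mul_left_cancel x := Function.LeftInverse.injective (g := ld x) (hQ1 x)
      mul_right_cancel y := Function.LeftInverse.injective (g := (rd · y)) (hQ3 · y)
      moufang := hid
      mul_inv_mul_self x := (congrArg (mul · x) (hQ2 x (rd x x))).trans (hQ4 x x) }
  exact moufang_quasigroup_is_loop_M3_general Q
end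

section
/- A quasigroup satisfying the Moufang identity $((xy)z)y = x(y(zy))$ has a two-sided neutral element, i.e., is a loop. -/
/-!
Write `R y` for the right translation by `y`. The Moufang identity says that `R y`, `R z`, `R y`
applied in succession give `R (y * (z * y))`; solving `y * (z * y) = y` for `z` gives an inverse
`z = y⁻¹` with `R y⁻¹ = (R y)⁻¹`. A right translation is determined by its value at one point, and
from this `x \ x` is seen to be an idempotent acting as a two-sided unit on `x`. For an idempotent,
right translation has order dividing two and left translation has order dividing three. For
idempotents `e`, `f`, put `w = e \ f`, so that `w⁻¹ = f \ e`; evaluating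
`((e * w) \ w⁻¹) * w = (e * w)⁻¹` shows that the square of left translation by `f` fixes `w⁻¹`.
Hence left translation by `f` fixes it too, which forces `e = f`: there is a single local unit.
-/

/-- A quasigroup in its equational presentation: `x \ y` and `y / x` are the unique solutions `z`
of `x * z = y` and `z * x = y`. Left division reuses the set-difference notation `\`. -/
class Quasigroup (Q : Type*) extends Mul Q, SDiff Q, Div Q where
  ldiv_mul_cancel (x y : Q) : x \ (x * y) = y
  mul_ldiv_cancel (x y : Q) : x * (x \ y) = y
  mul_rdiv_cancel (x y : Q) : x * y / y = x
  rdiv_mul_cancel (x y : Q) : x / y * y = x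

namespace Quasigroup

variable {Q : Type*} [Quasigroup Q]

instance : IsLeftCancelMul Q where
  mul_left_cancel x y z h := by
    rw [← ldiv_mul_cancel x y, ← ldiv_mul_cancel x z]
    exact congrArg (x \ ·) h

instance : IsRightCancelMul Q where
  mul_right_cancel x y z h := by
    rw [← mul_rdiv_cancel y x, ← mul_rdiv_cancel z x]
    exact congrArg (· / x) h

theorem ldiv_eq_iff {x y z : Q} : x \ y = z ↔ x * z = y := by
  rw [← mul_right_inj x, mul_ldiv_cancel, eq_comm]

end Quasigroup

/-- A quasigroup satisfying the Moufang identity `((xy)z)y = x(y(zy))`. -/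
class MoufangQuasigroup (Q : Type*) extends Quasigroup Q where
  moufang (x y z : Q) : x * y * z * y = x * (y * (z * y))

namespace MoufangQuasigroup

open Quasigroup

variable {Q : Type*} [MoufangQuasigroup Q]

/-- The inverse of `y`: right translation by `y⁻¹` inverts right translation by `y`. The formula
solves `y * (y⁻¹ * y) = y`. -/
instance : Inv Q := ⟨fun y => (y \ y) / y⟩

theorem inv_mul_self (x : Q) : x⁻¹ * x = x \ x := rdiv_mul_cancel _ _

theorem inv_mul_cancel_right (x y : Q) : x * y⁻¹ * y = x := by
  simpa only [rdiv_mul_cancel, inv_mul_self, mul_ldiv_cancel] using moufang (x / y) y y⁻¹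

theorem mul_inv_cancel_right (x y : Q) : x * y * y⁻¹ = x :=
  mul_right_cancel (inv_mul_cancel_right (x * y) y)

theorem inv_eq_of_mul_mul_eq {x y z : Q} (h : x * y * z = x) : y⁻¹ = z :=
  mul_left_cancel ((mul_inv_cancel_right x y).trans h.symm)

theorem inv_inv (x : Q) : x⁻¹⁻¹ = x :=
  inv_eq_of_mul_mul_eq (inv_mul_cancel_right x x)

theorem inv_ldiv (x y : Q) : (x \ y)⁻¹ = y \ x :=
  inv_eq_of_mul_mul_eq (x := x) (by rw [mul_ldiv_cancel, mul_ldiv_cancel])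

theorem inv_mul_mul (y z : Q) : (y * (z * y))⁻¹ = y⁻¹ * (z⁻¹ * y⁻¹) :=
  inv_eq_of_mul_mul_eq (x := y) (by simp only [← moufang, mul_inv_cancel_right])

theorem mul_inv_mul_mul_self (y z : Q) : y * (y⁻¹ * z * y) = z * y := by
  apply mul_left_cancel (a := y)
  calc y * (y * (y⁻¹ * z * y))
      = y * y * (y⁻¹ * (z * y * y⁻¹)) * y := by rw [mul_inv_cancel_right, moufang]
    _ = y * (z * y) := by rw [← moufang, mul_inv_cancel_right, inv_mul_cancel_right]

theorem inv_ldiv_mul_self (y z : Q) : (y⁻¹ \ z) * y = y * (z * y) := by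
  rw [← mul_inv_mul_mul_self, mul_ldiv_cancel]

theorem mul_inv_self (x : Q) : x * x⁻¹ = x \ x := by
  simpa only [inv_mul_cancel_right, inv_mul_self] using mul_inv_mul_mul_self x x⁻¹

theorem ldiv_self_mul (x : Q) : (x \ x) * x = x := by
  rw [← mul_inv_self, inv_mul_cancel_right]

theorem inv_ldiv_inv_self (x : Q) : x⁻¹ \ x⁻¹ = x \ x := by
  rw [← mul_inv_self, inv_inv, inv_mul_self]

theorem isIdempotentElem_ldiv_self (x : Q) : IsIdempotentElem (x \ x) := by
  have ldiv_self_mul_inv : (x \ x) * x⁻¹ = x⁻¹ := by rw [← inv_ldiv_inv_self, ldiv_self_mul]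
  have inv_mul_ldiv_self : x⁻¹ * (x \ x) = x⁻¹ := by rw [← inv_ldiv_inv_self, mul_ldiv_cancel]
  simpa only [IsIdempotentElem, mul_ldiv_cancel, inv_mul_ldiv_self, ldiv_self_mul_inv,
    mul_inv_self] using moufang x (x \ x) x⁻¹

theorem mul_self_mul (x y : Q) : x * x * y = x⁻¹ \ (x⁻¹ \ y) := by
  apply mul_right_cancel (b := x)
  rw [inv_ldiv_mul_self, inv_ldiv_mul_self, moufang]

theorem mul_mul_ldiv_mul (x y z : Q) : x * (y * (((x * y) \ z) * y)) = z * y := by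
  rw [← moufang, mul_ldiv_cancel]

section Idempotent

variable {e f : Q}

theorem inv_eq_self_of_isIdempotentElem (he : IsIdempotentElem e) : e⁻¹ = e :=
  inv_eq_of_mul_mul_eq (x := e) (by rw [he.eq, he.eq])

theorem mul_mul_self_of_isIdempotentElem (he : IsIdempotentElem e) (x : Q) : x * e * e = x := by
  simpa only [inv_eq_self_of_isIdempotentElem he] using mul_inv_cancel_right x e

theorem mul_mul_mul_of_isIdempotentElem (he : IsIdempotentElem e) (x : Q) :
    e * (e * (e * x)) = x := by
  have mul_eq : e * x = e \ (e \ x) := by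
    simpa only [he.eq, inv_eq_self_of_isIdempotentElem he] using mul_self_mul e x
  rw [mul_eq, mul_ldiv_cancel, mul_ldiv_cancel]

theorem mul_ldiv_self_mul_of_isIdempotentElem (he : IsIdempotentElem e) (x : Q) :
    e * (((x * e) \ (x * e)) * e) = x \ x := by
  rw [eq_comm, ldiv_eq_iff, mul_mul_ldiv_mul, mul_mul_self_of_isIdempotentElem he]

theorem mul_inv_mul_of_isIdempotentElem (he : IsIdempotentElem e) (x : Q) :
    x * (e * x)⁻¹ = e \ (x \ x) := by
  have inv_eq : (e * x)⁻¹ = e * ((x * e)⁻¹ * e) := by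
    rw [← mul_mul_self_of_isIdempotentElem he x, inv_mul_mul,
      mul_mul_self_of_isIdempotentElem he x, inv_eq_self_of_isIdempotentElem he]
  rw [eq_comm, ldiv_eq_iff, inv_eq, ← moufang, mul_inv_self,
    mul_ldiv_self_mul_of_isIdempotentElem he]

theorem mul_ldiv_inv_mul_of_isIdempotentElem (he : IsIdempotentElem e) (x : Q) :
    ((e * x) \ x⁻¹) * x = (e * x)⁻¹ := by
  set u := (x \ x) \ e with hu
  have inv_u : u⁻¹ = x * (e * x)⁻¹ := by
    rw [inv_ldiv, mul_inv_mul_of_isIdempotentElem he]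
  have sandwich_u : x * (u * x) = x⁻¹ \ (e * x) := by
    rw [eq_comm, ldiv_eq_iff, hu, ← inv_mul_self, mul_mul_ldiv_mul]
  calc ((e * x) \ x⁻¹) * x = (x * (u * x))⁻¹ * x := by rw [sandwich_u, inv_ldiv]
    _ = x⁻¹ * (u⁻¹ * x⁻¹) * x := by rw [inv_mul_mul]
    _ = (x \ u⁻¹) * x⁻¹ * x := by rw [← inv_ldiv_mul_self x⁻¹, inv_inv]
    _ = (e * x)⁻¹ := by rw [inv_mul_cancel_right, inv_u, ldiv_mul_cancel]

theorem eq_of_isIdempotentElem (he : IsIdempotentElem e) (hf : IsIdempotentElem f) : e = f := by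
  have mul_eq_ldiv : f * (f \ e) = f \ (f \ e) := by
    have ldiv_mul_eq : (f \ (f \ e)) * (e \ f) = f := by
      simpa only [mul_ldiv_cancel, inv_ldiv, inv_eq_self_of_isIdempotentElem hf] using
        mul_ldiv_inv_mul_of_isIdempotentElem he (e \ f)
    simpa only [ldiv_mul_eq, inv_ldiv] using mul_inv_cancel_right (f \ (f \ e)) (e \ f)
  have mul_mul_eq : f * (f * (f \ e)) = f \ e := by rw [mul_eq_ldiv, mul_ldiv_cancel]
  have mul_eq : f * (f \ e) = f \ e := by
    simpa only [mul_mul_eq] using mul_mul_mul_of_isIdempotentElem hf (f \ e)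
  have mul_eq_mul : f * e = e * e := by
    rw [he.eq, ← ldiv_eq_iff, ← mul_eq, mul_ldiv_cancel]
  exact (mul_right_cancel mul_eq_mul).symm

end Idempotent

theorem ldiv_self_eq_ldiv_self (x y : Q) : x \ x = y \ y :=
  eq_of_isIdempotentElem (isIdempotentElem_ldiv_self x) (isIdempotentElem_ldiv_self y)

end MoufangQuasigroup

theorem moufang_quasigroup_is_loop_M4 (Q : Type*) (mul ld rd : Q → Q → Q)
    (hQ1 : ∀ x y, ld x (mul x y) = y) (hQ2 : ∀ x y, mul x (ld x y) = y)
    (hQ3 : ∀ x y, rd (mul x y) y = x) (hQ4 : ∀ x y, mul (rd x y) y = x)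
    [Nonempty Q]
    (hid : ∀ x y z, mul (mul (mul x y) z) y = mul x (mul y (mul z y))) :
    ∃ e : Q, ∀ x, mul e x = x ∧ mul x e = x := by
  let _ : MoufangQuasigroup Q :=
    { mul := mul, sdiff := ld, div := rd
      ldiv_mul_cancel := hQ1, mul_ldiv_cancel := hQ2
      mul_rdiv_cancel := hQ3, rdiv_mul_cancel := hQ4
      moufang := hid }
  obtain ⟨c⟩ := ‹Nonempty Q›
  refine ⟨c \ c, fun x => ?_⟩
  rw [MoufangQuasigroup.ldiv_self_eq_ldiv_self c x]
  exact ⟨MoufangQuasigroup.ldiv_self_mul x, Quasigroup.mul_ldiv_cancel x x⟩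
end

section
/- In a loop, the three extra-loop identities $(x(yz))y = (xy)(zy)$, $((xy)z)x = x(y(zx))$, and $(yz)(yx) = y((zy)x)$ are pairwise equivalent: if a loop satisfies any one of them, it satisfies all three. -/
/-!
Each of the identities `(x(yz))y = (xy)(zy)` and `((xy)z)x = x(y(zx))` gives a loop the inverse
property: `x⁻¹(xy) = y = (yx)x⁻¹` for a suitable map `x ↦ x⁻¹`. In an inverse property loop every
autotopism `(A, B, C)`, i.e. `A x * B y = C (x * y)`, yields further ones by solving this equation
for `A x` or `B y`. The first identity says that `(R_y, R_y L_y⁻¹, R_y)` is an autotopism, and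
solving for the second factor turns it into `(L_y⁻¹, R_y, R_y L_y⁻¹)`, which is the second
identity. The third identity is the mirror image of the first one, whereas the second one is its
own mirror image.
-/

open MulOpposite

/-- A loop: a unital magma all of whose left and right translations are bijective. The divisions
are not part of the data, so that this is a proposition about the multiplication. -/
class IsLoop (Q : Type*) [MulOneClass Q] : Prop where
  mul_left_bijective : ∀ a : Q, Function.Bijective (a * ·)
  mul_right_bijective : ∀ a : Q, Function.Bijective (· * a)

/-- The extra identity `(x(yz))y = (xy)(zy)`, in which a right translation is distributed over a
product. -/
def RightExtra (Q : Type*) [Mul Q] : Prop :=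
  ∀ x y z : Q, x * (y * z) * y = x * y * (z * y)

/-- The self-dual extra identity `((xy)z)x = x(y(zx))`. -/
def MiddleExtra (Q : Type*) [Mul Q] : Prop :=
  ∀ x y z : Q, x * y * z * x = x * (y * (z * x))

/-- The extra identity `(yz)(yx) = y((zy)x)`, the mirror image of `RightExtra`. -/
def LeftExtra (Q : Type*) [Mul Q] : Prop :=
  ∀ x y z : Q, y * z * (y * x) = y * (z * y * x)

/-- The flexible law, which makes one-sided inverses in a loop two-sided. -/
def Flexible (Q : Type*) [Mul Q] : Prop :=
  ∀ x y : Q, x * y * x = x * (y * x)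

/-- The operation `⁻¹` picks two-sided inverses. Without associativity, this does not allow one
to cancel `x⁻¹` against `x` inside longer products. -/
class TwoSidedInv (Q : Type*) [MulOneClass Q] [Inv Q] : Prop where
  mul_inv_self : ∀ x : Q, x * x⁻¹ = 1
  inv_mul_self : ∀ x : Q, x⁻¹ * x = 1

/-- The inverse property: translations by `x⁻¹` undo the translations by `x` on both sides. -/
class InverseProperty (Q : Type*) [Mul Q] [Inv Q] : Prop where
  inv_mul_cancel_left : ∀ x y : Q, x⁻¹ * (x * y) = y
  mul_inv_cancel_right : ∀ x y : Q, y * x * x⁻¹ = y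

/-- The triple `(L_y⁻¹, R_y, R_y L_y⁻¹)` is an autotopism for every `y`. This is the common form
to which `RightExtra` and `MiddleExtra` are reduced. -/
def ExtraAutotopism (Q : Type*) [Mul Q] [Inv Q] : Prop :=
  ∀ x y z : Q, y⁻¹ * x * (z * y) = y⁻¹ * (x * z) * y

section Mirror

variable {Q : Type*}

theorem rightExtra_mulOpposite_iff [Mul Q] : RightExtra Qᵐᵒᵖ ↔ LeftExtra Q :=
  ⟨fun h x y z => (unop_injective.eq_iff.2 (h (op x) (op y) (op z))).symm,
    fun h x y z => unop_injective (h x.unop y.unop z.unop).symm⟩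

theorem middleExtra_mulOpposite_iff [Mul Q] : MiddleExtra Qᵐᵒᵖ ↔ MiddleExtra Q :=
  ⟨fun h x y z => (unop_injective.eq_iff.2 (h (op x) (op z) (op y))).symm,
    fun h x y z => unop_injective (h x.unop z.unop y.unop).symm⟩

instance [MulOneClass Q] [IsLoop Q] : IsLoop Qᵐᵒᵖ where
  mul_left_bijective a :=
    (opEquiv.bijective.comp (IsLoop.mul_right_bijective a.unop)).comp opEquiv.symm.bijective
  mul_right_bijective a :=
    (opEquiv.bijective.comp (IsLoop.mul_left_bijective a.unop)).comp opEquiv.symm.bijective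

end Mirror

section Flexible

variable {Q : Type*} [MulOneClass Q]

theorem RightExtra.flexible (h : RightExtra Q) : Flexible Q := fun x y => by
  simpa only [one_mul] using h 1 x y

theorem MiddleExtra.flexible (h : MiddleExtra Q) : Flexible Q := fun x y => by
  simpa only [mul_one, one_mul] using h x y 1

instance [IsLoop Q] : IsCancelMul Q where
  mul_left_cancel a := (IsLoop.mul_left_bijective a).injective
  mul_right_cancel a := (IsLoop.mul_right_bijective a).injective

theorem Flexible.exists_twoSidedInv [IsLoop Q] (h : Flexible Q) :
    ∃ _ : Inv Q, TwoSidedInv Q := by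
  choose inv mul_inv using fun x : Q => (IsLoop.mul_left_bijective x).surjective 1
  let : Inv Q := ⟨inv⟩
  refine ⟨_, mul_inv, fun x => mul_left_cancel (a := x) ?_⟩
  calc x * (x⁻¹ * x) = x * x⁻¹ * x := (h x x⁻¹).symm
    _ = 1 * x := congrArg (· * x) (mul_inv x)
    _ = x * 1 := by rw [one_mul, mul_one]

end Flexible

namespace TwoSidedInv

variable {Q : Type*} [MulOneClass Q] [IsCancelMul Q] [Inv Q] [TwoSidedInv Q]

theorem inv_inv (x : Q) : x⁻¹⁻¹ = x :=
  mul_left_cancel (a := x⁻¹) ((mul_inv_self _).trans (inv_mul_self x).symm)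

theorem inverseProperty_of_mul_inv_cancel (mul_inv_cancel_left : ∀ x y : Q, x * (x⁻¹ * y) = y)
    (inv_mul_cancel_right : ∀ x y : Q, y * x⁻¹ * x = y) : InverseProperty Q where
  inv_mul_cancel_left x y := by simpa only [inv_inv] using mul_inv_cancel_left x⁻¹ y
  mul_inv_cancel_right x y := by simpa only [inv_inv] using inv_mul_cancel_right x⁻¹ y

end TwoSidedInv

namespace RightExtra

open TwoSidedInv

variable {Q : Type*} [MulOneClass Q] [IsCancelMul Q] [Inv Q] [TwoSidedInv Q]

theorem inv_mul_cancel_left (h : RightExtra Q) (x y : Q) : x⁻¹ * (x * y) = y :=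
  mul_right_cancel (b := x) (by rw [h, inv_mul_self, one_mul])

theorem mul_inv_cancel_left (h : RightExtra Q) (x y : Q) : x * (x⁻¹ * y) = y := by
  simpa only [TwoSidedInv.inv_inv] using h.inv_mul_cancel_left x⁻¹ y

theorem mul_inv_rev (h : RightExtra Q) (x y : Q) : (x * y)⁻¹ = y⁻¹ * x⁻¹ := by
  refine mul_right_cancel (b := y) (mul_left_cancel (a := x * y) ?_)
  calc x * y * ((x * y)⁻¹ * y) = y := h.mul_inv_cancel_left _ _
    _ = x * x⁻¹ * y := by rw [mul_inv_self, one_mul]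
    _ = x * (y * (y⁻¹ * x⁻¹)) * y := by rw [h.mul_inv_cancel_left]
    _ = x * y * (y⁻¹ * x⁻¹ * y) := h _ _ _

theorem inv_mul_cancel_right (h : RightExtra Q) (x y : Q) : y * x⁻¹ * x = y :=
  calc y * x⁻¹ * x = (x⁻¹ * (x * y⁻¹))⁻¹ := by simp only [h.mul_inv_rev, TwoSidedInv.inv_inv]
    _ = y := by rw [h.inv_mul_cancel_left, TwoSidedInv.inv_inv]

theorem exists_inverseProperty {Q : Type*} [MulOneClass Q] [IsLoop Q] (h : RightExtra Q) :
    ∃ _ : Inv Q, InverseProperty Q := by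
  obtain ⟨_, _⟩ := h.flexible.exists_twoSidedInv
  exact ⟨_, inverseProperty_of_mul_inv_cancel h.mul_inv_cancel_left h.inv_mul_cancel_right⟩

end RightExtra

namespace MiddleExtra

open TwoSidedInv

variable {Q : Type*} [MulOneClass Q] [IsLoop Q]

theorem inv_mul_cancel_right [Inv Q] [TwoSidedInv Q] (h : MiddleExtra Q) (x y : Q) :
    y * x⁻¹ * x = y := by
  obtain ⟨z, rfl⟩ := (IsLoop.mul_left_bijective x).surjective y
  calc x * z * x⁻¹ * x = x * (z * (x⁻¹ * x)) := h _ _ _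
    _ = x * z := by rw [inv_mul_self, mul_one]

theorem mul_inv_cancel_left [Inv Q] [TwoSidedInv Q] (h : MiddleExtra Q) (x y : Q) :
    x * (x⁻¹ * y) = y :=
  calc x * (x⁻¹ * y) = x * (x⁻¹ * (y * x⁻¹ * x)) := by rw [h.inv_mul_cancel_right]
    _ = x * x⁻¹ * (y * x⁻¹) * x := (h _ _ _).symm
    _ = y := by rw [mul_inv_self, one_mul, h.inv_mul_cancel_right]

theorem exists_inverseProperty (h : MiddleExtra Q) : ∃ _ : Inv Q, InverseProperty Q := by
  obtain ⟨_, _⟩ := h.flexible.exists_twoSidedInv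
  exact ⟨_, inverseProperty_of_mul_inv_cancel h.mul_inv_cancel_left h.inv_mul_cancel_right⟩

end MiddleExtra

namespace InverseProperty

variable {Q : Type*} [MulOneClass Q] [Inv Q] [InverseProperty Q]

theorem inv_inv (x : Q) : x⁻¹⁻¹ = x := by
  have inv_mul_self : x⁻¹ * x = 1 := by simpa only [mul_one] using inv_mul_cancel_left x 1
  simpa only [inv_mul_self, mul_one] using inv_mul_cancel_left x⁻¹ x

theorem mul_inv_cancel_left (x y : Q) : x * (x⁻¹ * y) = y := by
  simpa only [inv_inv] using inv_mul_cancel_left x⁻¹ y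

theorem eq_inv_mul_iff_mul_eq {x y z : Q} : y = x⁻¹ * z ↔ x * y = z :=
  ⟨fun h => by rw [h, mul_inv_cancel_left], fun h => by rw [← h, inv_mul_cancel_left]⟩

theorem mul_inv_rev (x y : Q) : (x * y)⁻¹ = y⁻¹ * x⁻¹ := by
  have mul_inv_mul : y * (x * y)⁻¹ = x⁻¹ := by
    simpa only [inv_mul_cancel_left] using mul_inv_cancel_right (x * y) x⁻¹
  exact eq_inv_mul_iff_mul_eq.2 mul_inv_mul

theorem rightExtra_iff_extraAutotopism : RightExtra Q ↔ ExtraAutotopism Q := by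
  constructor <;> intro h x y z
  · have solve : z * y = x⁻¹ * y * (y⁻¹ * (x * z) * y) := by
      rw [← h, mul_inv_cancel_left, inv_mul_cancel_left]
    calc y⁻¹ * x * (z * y) = (x⁻¹ * y)⁻¹ * (z * y) := by rw [mul_inv_rev, inv_inv]
      _ = y⁻¹ * (x * z) * y := (eq_inv_mul_iff_mul_eq.2 solve.symm).symm
  · refine eq_inv_mul_iff_mul_eq.1 ?_ |>.symm
    calc z * y = y⁻¹ * (x⁻¹ * (x * (y * z))) * y := by simp only [inv_mul_cancel_left]
      _ = y⁻¹ * x⁻¹ * (x * (y * z) * y) := (h _ _ _).symm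
      _ = (x * y)⁻¹ * (x * (y * z) * y) := by rw [mul_inv_rev]

theorem middleExtra_iff_extraAutotopism : MiddleExtra Q ↔ ExtraAutotopism Q := by
  constructor <;> intro h x y z
  · have flexible_inv (w : Q) : y⁻¹ * w * y = y⁻¹ * (w * y) :=
      eq_inv_mul_iff_mul_eq.2 (by rw [← h.flexible, mul_inv_cancel_left])
    rw [flexible_inv, eq_inv_mul_iff_mul_eq, ← h, mul_inv_cancel_left]
  · have inv_flexible (w : Q) : x⁻¹ * (w * x) = x⁻¹ * w * x := by
      simpa only [mul_one, one_mul] using h 1 x w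
    refine eq_inv_mul_iff_mul_eq.1 ?_ |>.symm
    calc y * (z * x) = x⁻¹ * (x * y) * (z * x) := by rw [inv_mul_cancel_left]
      _ = x⁻¹ * (x * y * z) * x := h _ _ _
      _ = x⁻¹ * (x * y * z * x) := (inv_flexible _).symm

theorem rightExtra_iff_middleExtra : RightExtra Q ↔ MiddleExtra Q :=
  rightExtra_iff_extraAutotopism.trans middleExtra_iff_extraAutotopism.symm

end InverseProperty

namespace IsLoop

variable {Q : Type*} [MulOneClass Q] [IsLoop Q]

theorem rightExtra_iff_middleExtra : RightExtra Q ↔ MiddleExtra Q := by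
  constructor <;> intro h <;> obtain ⟨_, _⟩ := h.exists_inverseProperty
  · exact InverseProperty.rightExtra_iff_middleExtra.1 h
  · exact InverseProperty.rightExtra_iff_middleExtra.2 h

theorem leftExtra_iff_middleExtra : LeftExtra Q ↔ MiddleExtra Q := by
  rw [← rightExtra_mulOpposite_iff, ← middleExtra_mulOpposite_iff, rightExtra_iff_middleExtra]

end IsLoop

/-- In a loop, the three extra-loop identities are pairwise equivalent. -/
theorem extra_identities_equivalent_in_loops (Q : Type*) (mul ld rd : Q → Q → Q) (e : Q)
    (hQ1 : ∀ x y, ld x (mul x y) = y) (hQ2 : ∀ x y, mul x (ld x y) = y)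
    (hQ3 : ∀ x y, rd (mul x y) y = x) (hQ4 : ∀ x y, mul (rd x y) y = x)
    (hL : ∀ x, mul e x = x) (hR : ∀ x, mul x e = x) :
    ((∀ x y z, mul (mul x (mul y z)) y = mul (mul x y) (mul z y)) ↔
      (∀ x y z, mul (mul (mul x y) z) x = mul x (mul y (mul z x)))) ∧
    ((∀ x y z, mul (mul x (mul y z)) y = mul (mul x y) (mul z y)) ↔
      (∀ x y z, mul (mul y z) (mul y x) = mul y (mul (mul z y) x))) := by
  let : MulOneClass Q := { mul := mul, one := e, one_mul := hL, mul_one := hR }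
  have : IsLoop Q :=
    { mul_left_bijective := fun a =>
        Function.bijective_iff_has_inverse.2 ⟨ld a, hQ1 a, hQ2 a⟩
      mul_right_bijective := fun a =>
        Function.bijective_iff_has_inverse.2 ⟨(rd · a), (hQ3 · a), (hQ4 · a)⟩ }
  have right_iff_middle : RightExtra Q ↔ MiddleExtra Q := IsLoop.rightExtra_iff_middleExtra
  have left_iff_middle : LeftExtra Q ↔ MiddleExtra Q := IsLoop.leftExtra_iff_middleExtra
  exact ⟨right_iff_middle, right_iff_middle.trans left_iff_middle.symm⟩
end

section
/- Every diassociative A-loop is a Moufang loop (the Bruck–Paige conjecture): if every inner mapping of a loop $Q$ is an automorphism of $Q$ and every subloop of $Q$ generated by two elements is a group, then $Q$ satisfies the Moufang identity $x(y(xz))=((xy)x)z$. -/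
/-- Left translation of a quasigroup, as a permutation. -/
def leftTr {Q : Type*} (mul ld : Q → Q → Q)
    (h1 : ∀ x y, ld x (mul x y) = y) (h2 : ∀ x y, mul x (ld x y) = y)
    (x : Q) : Equiv.Perm Q :=
  ⟨fun y => mul x y, fun y => ld x y, fun y => h1 x y, fun y => h2 x y⟩

/-- Right translation of a quasigroup, as a permutation. -/
def rightTr {Q : Type*} (mul rd : Q → Q → Q)
    (h3 : ∀ x y, rd (mul x y) y = x) (h4 : ∀ x y, mul (rd x y) y = x)
    (x : Q) : Equiv.Perm Q :=
  ⟨fun y => mul y x, fun y => rd y x, fun y => h3 y x, fun y => h4 y x⟩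

/-- The subloop generated by two elements: the smallest subset containing
`a`, `b`, the neutral element `e`, and closed under `mul`, `ld`, `rd`. -/
def genSubloop {Q : Type*} (mul ld rd : Q → Q → Q) (e a b : Q) : Set Q :=
  ⋂₀ {T : Set Q | a ∈ T ∧ b ∈ T ∧ e ∈ T ∧
    (∀ x ∈ T, ∀ y ∈ T, mul x y ∈ T) ∧
    (∀ x ∈ T, ∀ y ∈ T, ld x y ∈ T) ∧
    (∀ x ∈ T, ∀ y ∈ T, rd x y ∈ T)}

/-!
In a loop with the inverse property, put `ℓ x y = L_{xy}⁻¹ L_x L_y` and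
`m x y = R_y⁻¹ L_x R_y L_x⁻¹`. If these inner mappings are automorphisms, then each of `ℓ x y`,
`ℓ y z` and `m x z` carries `(xy)z` to `x(yz)`. Comparing these three descriptions of the associator
gives `ℓ x y = m y x`. Through this equality the law `ℓ x⁻¹ (xy) = ℓ y⁻¹ x⁻¹` turns into
`m x (xz) = m x z`, and, as `m z x` is inverse to `m x z`,
`x(y(xz)) = m x (xz) ((xy)(xz)) = m x z ((xy)(xz)) = m x z (ℓ x z (((xy)x)z)) = ((xy)x)z`.
-/

/-- A loop with the inverse property. Both divisions are expressed through the inverse, so no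
division operations are needed. -/
class IPLoop (Q : Type*) extends MulOneClass Q, Inv Q where
  inv_mul_cancel_left : ∀ x y : Q, x⁻¹ * (x * y) = y
  mul_inv_cancel_right : ∀ x y : Q, x * y * y⁻¹ = x

/-- The inner mappings `L_{xy}⁻¹ L_x L_y` and `R_y⁻¹ L_x R_y L_x⁻¹`, which measure the failure of
associativity, are automorphisms. Every A-loop with the inverse property has this property. -/
class HasAutomorphicAssociators (Q : Type*) [IPLoop Q] : Prop where
  leftInner_mul : ∀ x y z w : Q, (x * y)⁻¹ * (x * (y * (z * w))) =
    ((x * y)⁻¹ * (x * (y * z))) * ((x * y)⁻¹ * (x * (y * w)))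
  middleInner_mul : ∀ x y z w : Q, x * (x⁻¹ * (z * w) * y) * y⁻¹ =
    (x * (x⁻¹ * z * y) * y⁻¹) * (x * (x⁻¹ * w * y) * y⁻¹)

namespace IPLoop

section Basic

variable {Q : Type*} [IPLoop Q]

instance : IsCancelMul Q where
  mul_left_cancel x y z h := by
    rw [← inv_mul_cancel_left x y, ← inv_mul_cancel_left x z]
    exact congrArg (x⁻¹ * ·) h
  mul_right_cancel y x z h := by
    rw [← mul_inv_cancel_right x y, ← mul_inv_cancel_right z y]
    exact congrArg (· * y⁻¹) h

theorem inv_mul_cancel (x : Q) : x⁻¹ * x = 1 := by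
  simpa only [mul_one] using inv_mul_cancel_left x 1

theorem mul_inv_cancel (x : Q) : x * x⁻¹ = 1 := by
  simpa only [one_mul] using mul_inv_cancel_right 1 x

instance : InvolutiveInv Q where
  inv_inv x := mul_right_cancel ((inv_mul_cancel x⁻¹).trans (mul_inv_cancel x).symm)

theorem mul_inv_cancel_left (x y : Q) : x * (x⁻¹ * y) = y := by
  simpa only [inv_inv] using inv_mul_cancel_left x⁻¹ y

theorem inv_mul_cancel_right (x y : Q) : x * y⁻¹ * y = x := by
  simpa only [inv_inv] using mul_inv_cancel_right x y⁻¹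

theorem mul_inv_rev (x y : Q) : (x * y)⁻¹ = y⁻¹ * x⁻¹ := by
  have inv_mul_left : (x * y)⁻¹ * x = y⁻¹ := by
    simpa only [mul_inv_cancel_right] using inv_mul_cancel_left (x * y) y⁻¹
  rw [← inv_mul_left, mul_inv_cancel_right]

theorem map_inv {R : Type*} [IPLoop R] (f : Q →ₙ* R) (x : Q) : f x⁻¹ = (f x)⁻¹ := by
  have map_one : f 1 = 1 := by
    apply mul_left_cancel (a := f 1)
    rw [← map_mul, mul_one, mul_one]
  apply mul_left_cancel (a := f x)
  rw [← map_mul, mul_inv_cancel, map_one, mul_inv_cancel]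

end Basic

section Inner

variable {Q : Type*} [IPLoop Q] [HasAutomorphicAssociators Q]

/-- The inner mapping `L_{xy}⁻¹ L_x L_y`, bundled as an endomorphism. -/
def leftInner (x y : Q) : Q →ₙ* Q where
  toFun z := (x * y)⁻¹ * (x * (y * z))
  map_mul' := HasAutomorphicAssociators.leftInner_mul x y

/-- The inner mapping `R_y⁻¹ L_x R_y L_x⁻¹`, bundled as an endomorphism. -/
def middleInner (x y : Q) : Q →ₙ* Q where
  toFun z := x * (x⁻¹ * z * y) * y⁻¹
  map_mul' := HasAutomorphicAssociators.middleInner_mul x y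

theorem leftInner_apply (x y z : Q) : leftInner x y z = (x * y)⁻¹ * (x * (y * z)) := rfl

theorem middleInner_apply (x y z : Q) : middleInner x y z = x * (x⁻¹ * z * y) * y⁻¹ := rfl

-- Conjugating by inversion, which commutes with automorphisms, exchanges left and right.
theorem leftInner_apply' (x y z : Q) : leftInner x y z = z * y⁻¹ * x⁻¹ * (x * y) := by
  rw [← inv_inv (leftInner x y z), ← map_inv, leftInner_apply]
  simp only [mul_inv_rev, inv_inv]

theorem leftInner_inv_inv_apply (x y z : Q) :
    leftInner y⁻¹ x⁻¹ z = x * y * (y⁻¹ * (x⁻¹ * z)) := by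
  rw [leftInner_apply, ← mul_inv_rev, inv_inv]

theorem leftInner_apply_right (x y : Q) : leftInner x y y = y := by
  rw [leftInner_apply', mul_inv_cancel, one_mul, inv_mul_cancel_left]

theorem right_alternative (x y : Q) : x * y * y = x * (y * y) := by
  apply mul_left_cancel (a := (x * y)⁻¹)
  rw [inv_mul_cancel_left, ← leftInner_apply, leftInner_apply_right]

theorem leftInner_inv_inv_apply_mul (x y : Q) : leftInner y⁻¹ x⁻¹ (x * y) = x * y := by
  rw [leftInner_inv_inv_apply, inv_mul_cancel_left, inv_mul_cancel, mul_one]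

theorem leftInner_apply_mul (x y : Q) : leftInner x y (x * y) = x * y := by
  rw [← inv_inj, ← map_inv, mul_inv_rev]
  simpa only [inv_inv] using leftInner_inv_inv_apply_mul y⁻¹ x⁻¹

theorem leftInner_inv_inv_leftInner (x y z : Q) :
    leftInner y⁻¹ x⁻¹ (leftInner x y z) = z := by
  rw [leftInner_apply x y z, map_mul, map_inv, leftInner_inv_inv_apply_mul,
    leftInner_inv_inv_apply, inv_mul_cancel_left, inv_mul_cancel_left, inv_mul_cancel_left]

theorem leftInner_inv_mul (x y z : Q) : leftInner x⁻¹ (x * y) z = leftInner y⁻¹ x⁻¹ z := by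
  apply mul_left_cancel (a := x * y)
  calc x * y * leftInner x⁻¹ (x * y) z
      = x * y * (y⁻¹ * (x⁻¹ * (x * y * z))) := by rw [leftInner_apply, inv_mul_cancel_left]
    _ = leftInner y⁻¹ x⁻¹ (x * y * z) := (leftInner_inv_inv_apply x y _).symm
    _ = x * y * leftInner y⁻¹ x⁻¹ z := by rw [map_mul, leftInner_inv_inv_apply_mul]

theorem leftInner_mul_inv (x y z : Q) : leftInner x (y * x)⁻¹ z = leftInner y x z := by
  simpa only [← mul_inv_rev, inv_inv] using leftInner_inv_mul x⁻¹ y⁻¹ z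

theorem middleInner_apply' (x y z : Q) : middleInner x y z = y * (y⁻¹ * (z * x) * x⁻¹) := by
  rw [← inv_inv (middleInner x y z), ← map_inv, middleInner_apply]
  simp only [mul_inv_rev, inv_inv]

theorem middleInner_middleInner (x y z : Q) : middleInner x y (middleInner y x z) = z := by
  rw [middleInner_apply' y x, middleInner_apply, inv_mul_cancel_left, inv_mul_cancel_right,
    mul_inv_cancel_left, mul_inv_cancel_right]

theorem middleInner_apply_right (x y : Q) : middleInner x y y = y := by
  rw [middleInner_apply, right_alternative, mul_inv_cancel_left, mul_inv_cancel_right]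

theorem middleInner_inv_right (x y z : Q) : middleInner x y⁻¹ z = middleInner y x z := by
  have right_inverse : middleInner x y (middleInner x y⁻¹ z) = z := by
    rw [middleInner_apply x y⁻¹ z, inv_inv, map_mul, middleInner_apply_right, middleInner_apply,
      inv_mul_cancel_left, inv_mul_cancel_right, inv_mul_cancel_right, mul_inv_cancel_left]
  rw [← middleInner_middleInner y x (middleInner x y⁻¹ z), right_inverse]

theorem middleInner_inv_left (x y z : Q) : middleInner x⁻¹ y z = middleInner y x z := by
  rw [← middleInner_middleInner y x (middleInner x⁻¹ y z), ← middleInner_inv_right y x,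
    middleInner_middleInner]

theorem middleInner_mul_mul (x y z : Q) : middleInner x z (x * y * z) = x * (y * z) := by
  rw [map_mul, middleInner_apply_right, middleInner_apply, inv_mul_cancel_left,
    inv_mul_cancel_right]

theorem leftInner_mul_mul (x y z : Q) : leftInner x y (x * y * z) = x * (y * z) := by
  rw [map_mul, leftInner_apply_mul, leftInner_apply, mul_inv_cancel_left]

theorem leftInner_mul_mul' (x y z : Q) : leftInner y z (x * y * z) = x * (y * z) := by
  rw [leftInner_apply', mul_inv_cancel_right, mul_inv_cancel_right]

theorem leftInner_mul_left_eq_middleInner (x y z : Q) :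
    leftInner x y (z * x) = middleInner z y (z * x) := by
  apply mul_right_cancel (b := y)
  simpa only [map_mul, leftInner_apply_right, middleInner_apply_right] using
    (leftInner_mul_mul' z x y).trans (middleInner_mul_mul z x y).symm

theorem leftInner_inv_mul_eq_middleInner (x y z : Q) :
    leftInner x y (x⁻¹ * z) = middleInner y z (x⁻¹ * z) := by
  have leftInner_eq : leftInner y (y⁻¹ * x⁻¹) (x⁻¹ * z) = leftInner x y (x⁻¹ * z) := by
    rw [← mul_inv_rev, leftInner_mul_inv]
  simpa only [mul_inv_cancel_left, leftInner_eq] using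
    (leftInner_mul_mul y (y⁻¹ * x⁻¹) z).trans (middleInner_mul_mul y (y⁻¹ * x⁻¹) z).symm

theorem leftInner_mul_apply_right (x y z : Q) : leftInner (x * y) z y = middleInner z x y := by
  simpa only [inv_mul_cancel_left, middleInner_inv_left] using
    leftInner_mul_left_eq_middleInner (x * y) z x⁻¹

theorem middleInner_mul_apply_right (x y z : Q) : middleInner z (x * y) y = leftInner x z y := by
  simpa only [inv_mul_cancel_left] using (leftInner_inv_mul_eq_middleInner x z (x * y)).symm

theorem leftInner_mul_inv_middleInner (x y z : Q) :
    leftInner x (y * z)⁻¹ (middleInner y x z) = z := by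
  simpa only [inv_inv, leftInner_mul_apply_right, middleInner_inv_left] using
    leftInner_inv_inv_leftInner (y * z) x⁻¹ z

theorem leftInner_inv_mul_apply_left (x y z : Q) :
    leftInner (x * y)⁻¹ z x = middleInner y z x := by
  rw [← middleInner_mul_apply_right, mul_inv_rev, inv_mul_cancel_right, middleInner_inv_right]

theorem middleInner_mul_mul_leftInner (x y z : Q) :
    middleInner (z * x) (x * y) (leftInner z x y) = y := by
  rw [← middleInner_inv_right, ← leftInner_mul_inv, ← middleInner_mul_apply_right,
    middleInner_middleInner]

theorem leftInner_mul_right_apply (x y z : Q) : leftInner x (y * z) z = leftInner x y z := by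
  have reassoc : x * (y * z) = x * y * leftInner x y z := by
    rw [leftInner_apply, mul_inv_cancel_left]
  calc leftInner x (y * z) z
      = leftInner (y * z) (x * y * leftInner x y z)⁻¹ z := by
        rw [← reassoc, leftInner_mul_inv]
    _ = leftInner (y * z) (x * y * leftInner x y z)⁻¹
          (middleInner (x * y) (y * z) (leftInner x y z)) := by
        rw [middleInner_mul_mul_leftInner]
    _ = leftInner x y z := leftInner_mul_inv_middleInner _ _ _

theorem leftInner_eq_middleInner (x y z : Q) : leftInner x y z = middleInner y x z := by
  rw [← middleInner_mul_apply_right, ← leftInner_inv_mul_apply_left, leftInner_mul_right_apply,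
    leftInner_inv_mul_apply_left]

theorem middleInner_mul_right (x y z : Q) : middleInner x (x * y) z = middleInner x y z := by
  simpa only [leftInner_eq_middleInner, middleInner_inv_left, middleInner_inv_right] using
    leftInner_inv_mul x y z

theorem moufang (x y z : Q) : x * (y * (x * z)) = x * y * x * z :=
  calc x * (y * (x * z))
      = middleInner x (x * z) (x * y * (x * z)) := (middleInner_mul_mul x y (x * z)).symm
    _ = middleInner x z (x * y * (x * z)) := middleInner_mul_right x z _
    _ = middleInner x z (leftInner x z (x * y * x * z)) := by rw [leftInner_mul_mul']
    _ = x * y * x * z := by rw [leftInner_eq_middleInner, middleInner_middleInner]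

end Inner

end IPLoop

/-- Diassociativity, for operations given separately: every subloop generated by two elements is
associative. -/
def Diassociative {Q : Type*} (mul ld rd : Q → Q → Q) (e : Q) : Prop :=
  ∀ a b : Q, ∀ x ∈ genSubloop mul ld rd e a b, ∀ y ∈ genSubloop mul ld rd e a b,
    ∀ z ∈ genSubloop mul ld rd e a b, mul x (mul y z) = mul (mul x y) z

section GenSubloop

variable {Q : Type*} {mul ld rd : Q → Q → Q} {e a b : Q}

theorem left_mem_genSubloop : a ∈ genSubloop mul ld rd e a b := fun _ hT => hT.1

theorem right_mem_genSubloop : b ∈ genSubloop mul ld rd e a b := fun _ hT => hT.2.1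

theorem ld_left_mem_genSubloop : ld a e ∈ genSubloop mul ld rd e a b :=
  fun _ ⟨ha, _, he, _, hld, _⟩ => hld a ha e he

end GenSubloop

namespace Diassociative

variable {Q : Type*} {mul ld rd : Q → Q → Q} {e : Q}

theorem ld_mul_self (hD : Diassociative mul ld rd e) (hQ1 : ∀ x y, ld x (mul x y) = y)
    (hQ2 : ∀ x y, mul x (ld x y) = y) (hL : ∀ x, mul e x = x) (hR : ∀ x, mul x e = x) (x : Q) :
    mul (ld x e) x = e := by
  have mul_ld_mul : mul x (mul (ld x e) x) = mul x e := by
    rw [hD x x x left_mem_genSubloop _ ld_left_mem_genSubloop x left_mem_genSubloop, hQ2, hL, hR]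
  rw [← hQ1 x (mul (ld x e) x), mul_ld_mul, hQ1]

theorem ld_mul_mul (hD : Diassociative mul ld rd e) (hQ1 : ∀ x y, ld x (mul x y) = y)
    (hQ2 : ∀ x y, mul x (ld x y) = y) (hL : ∀ x, mul e x = x) (hR : ∀ x, mul x e = x) (x y : Q) :
    mul (ld x e) (mul x y) = y := by
  rw [hD x y _ ld_left_mem_genSubloop x left_mem_genSubloop y right_mem_genSubloop,
    hD.ld_mul_self hQ1 hQ2 hL hR, hL]

theorem mul_mul_ld (hD : Diassociative mul ld rd e) (hQ2 : ∀ x y, mul x (ld x y) = y)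
    (hR : ∀ x, mul x e = x) (x y : Q) : mul (mul x y) (ld y e) = x := by
  rw [← hD y x x right_mem_genSubloop y left_mem_genSubloop _ ld_left_mem_genSubloop, hQ2, hR]

end Diassociative

theorem diassociative_Aloop_is_moufang_general (Q : Type*) (mul ld rd : Q → Q → Q) (e : Q)
    (inv : Q → Q) (hQ1 : ∀ x y, ld x (mul x y) = y) (hQ2 : ∀ x y, mul x (ld x y) = y)
    (hQ3 : ∀ x y, rd (mul x y) y = x) (hQ4 : ∀ x y, mul (rd x y) y = x)
    (hL : ∀ x, mul e x = x) (hR : ∀ x, mul x e = x)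
    (hA : ∀ φ ∈ Subgroup.closure
        (Set.range (leftTr mul ld hQ1 hQ2) ∪ Set.range (rightTr mul rd hQ3 hQ4)),
      φ e = e → ∀ a b : Q, φ (mul a b) = mul (φ a) (φ b))
    (inv_mul_mul : ∀ x y, mul (inv x) (mul x y) = y)
    (mul_mul_inv : ∀ x y, mul (mul x y) (inv y) = x) :
    ∀ x y z, mul x (mul y (mul x z)) = mul (mul (mul x y) x) z := by
  let _ : IPLoop Q :=
    { mul := mul, one := e, inv := inv, one_mul := hL, mul_one := hR
      inv_mul_cancel_left := inv_mul_mul, mul_inv_cancel_right := mul_mul_inv }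
  set L := leftTr mul ld hQ1 hQ2
  set R := rightTr mul rd hQ3 hQ4
  set mlt := Subgroup.closure (Set.range L ∪ Set.range R)
  have left_mem (x : Q) : L x ∈ mlt := Subgroup.subset_closure (.inl ⟨x, rfl⟩)
  have right_mem (x : Q) : R x ∈ mlt := Subgroup.subset_closure (.inr ⟨x, rfl⟩)
  have _ : HasAutomorphicAssociators Q :=
    { leftInner_mul x y := by
        have fixes_one : (x * y)⁻¹ * (x * (y * 1)) = 1 := by rw [mul_one, IPLoop.inv_mul_cancel]
        exact hA (L (x * y)⁻¹ * (L x * L y))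
          (mul_mem (left_mem _) (mul_mem (left_mem x) (left_mem y))) fixes_one
      middleInner_mul x y := by
        have fixes_one : x * (x⁻¹ * 1 * y) * y⁻¹ = 1 := by
          rw [mul_one, IPLoop.mul_inv_cancel_left, IPLoop.mul_inv_cancel]
        exact hA (R y⁻¹ * (L x * (R y * L x⁻¹)))
          (mul_mem (right_mem _) (mul_mem (left_mem x) (mul_mem (right_mem y) (left_mem _))))
          fixes_one }
  exact IPLoop.moufang

/-- Bruck–Paige conjecture: every diassociative A-loop is Moufang. -/
theorem diassociative_Aloop_is_moufang (Q : Type*) (mul ld rd : Q → Q → Q) (e : Q)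
    (hQ1 : ∀ x y, ld x (mul x y) = y) (hQ2 : ∀ x y, mul x (ld x y) = y)
    (hQ3 : ∀ x y, rd (mul x y) y = x) (hQ4 : ∀ x y, mul (rd x y) y = x)
    (hL : ∀ x, mul e x = x) (hR : ∀ x, mul x e = x)
    -- A-loop: every inner mapping (element of Mlt(Q) fixing e) is an automorphism
    (hA : ∀ φ ∈ Subgroup.closure
        (Set.range (leftTr mul ld hQ1 hQ2) ∪ Set.range (rightTr mul rd hQ3 hQ4)),
      φ e = e → ∀ a b : Q, φ (mul a b) = mul (φ a) (φ b))
    -- diassociativity: every 2-generated subloop is associative (hence a group)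
    (hD : ∀ a b : Q, ∀ x ∈ genSubloop mul ld rd e a b, ∀ y ∈ genSubloop mul ld rd e a b,
      ∀ z ∈ genSubloop mul ld rd e a b, mul x (mul y z) = mul (mul x y) z) :
    ∀ x y z, mul x (mul y (mul x z)) = mul (mul (mul x y) x) z :=
  diassociative_Aloop_is_moufang_general Q mul ld rd e (ld · e) hQ1 hQ2 hQ3 hQ4 hL hR hA
    (Diassociative.ld_mul_mul hD hQ1 hQ2 hL hR) (Diassociative.mul_mul_ld hD hQ2 hR)
end

section
/- Every commutative A-loop that is diassociative is a Moufang loop (Osborn's theorem): if $Q$ is a commutative loop in which every inner mapping is an automorphism, and every 2-generated subloop is a group, then $Q$ satisfies the Moufang identity $x(y(xz))=((xy)x)z$. -/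
/-!
Write `L_x` for the translation by `x` and `F(x, y) = L_{xy}⁻¹ L_x L_y`. In a commutative A-loop
with the inverse property, `F(x, y)` fixes `x` and `y` and `F(y, x) = F(x, y)⁻¹`, so
`L_x L_y = F(x, y)² L_y L_x` with `F(x, y)` central in the group generated by `L_x` and `L_y`.
Hence squaring and cubing are endomorphisms, and it is enough to show that the squares and the cubes
of the two sides of the Moufang identity agree. For squares this is immediate. It follows that
every square `s` satisfies `(sx)(sy) = s²(xy)`, so that sixth powers are central. Cubes therefore
have central squares, and three elements with central squares satisfy `x(yz) = y(xz)`.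
-/

theorem mem_center_of_mul_assoc_left {M : Type*} [CommMagma M] {n : M}
    (h : ∀ y z : M, n * (y * z) = n * y * z) : n ∈ Set.center M where
  comm y := mul_comm n y
  left_assoc := h
  right_assoc y z := by rw [mul_comm (y * z), mul_comm y z, h, mul_comm (n * z), mul_comm n z]

/-- A commutative loop with the inverse property. The quotient `x \ y = y / x` is `x⁻¹ * y`, so no
separate division operation is recorded. -/
class CommIPLoop (Q : Type*) extends CommMagma Q, MulOneClass Q, Inv Q where
  inv_mul_cancel_left : ∀ x y : Q, x⁻¹ * (x * y) = y

/-- A commutative inverse property A-loop. Only the generators `L_{xy}⁻¹ L_x L_y` of the inner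
mapping group are required to be automorphisms. -/
class CommIPALoop (Q : Type*) extends CommIPLoop Q where
  inner_map_mul : ∀ x y a b : Q, (x * y)⁻¹ * (x * (y * (a * b))) =
    ((x * y)⁻¹ * (x * (y * a))) * ((x * y)⁻¹ * (x * (y * b)))

namespace CommIPLoop

section InverseProperty

variable {Q : Type*} [CommIPLoop Q]

instance : IsLeftCancelMul Q where
  mul_left_cancel x y z h := by
    rw [← inv_mul_cancel_left x y, ← inv_mul_cancel_left x z]
    exact congrArg (x⁻¹ * ·) h

theorem inv_mul_cancel (x : Q) : x⁻¹ * x = 1 := by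
  simpa only [mul_one] using inv_mul_cancel_left x 1

instance : InvolutiveInv Q where
  inv_inv x := by
    simpa only [inv_mul_cancel, mul_one] using inv_mul_cancel_left x⁻¹ x

theorem mul_inv_cancel_left (x y : Q) : x * (x⁻¹ * y) = y := by
  simpa only [inv_inv] using inv_mul_cancel_left x⁻¹ y

theorem mul_inv_cancel_right (x y : Q) : x * y * y⁻¹ = x := by
  rw [mul_comm, mul_comm x, inv_mul_cancel_left]

theorem mul_inv (x y : Q) : (x * y)⁻¹ = x⁻¹ * y⁻¹ := by
  have h : (x * y)⁻¹ * y = x⁻¹ := by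
    simpa only [mul_comm x y, mul_inv_cancel_right] using inv_mul_cancel_left (y * x) x⁻¹
  rw [← h, mul_inv_cancel_right]

theorem mulAut_map_inv (f : MulAut Q) (x : Q) : f x⁻¹ = (f x)⁻¹ := by
  apply mul_left_cancel (a := f x)
  rw [← map_mul, mul_comm x, inv_mul_cancel, map_one, mul_comm, inv_mul_cancel]

/-- A Moufang element of a commutative loop; the loop is Moufang when all its elements are. -/
def IsMoufang (a : Q) : Prop :=
  ∀ x y : Q, a * x * (a * y) = a * a * (x * y)

theorem IsMoufang.mul_mul_eq {a : Q} (ha : IsMoufang a) (y z : Q) :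
    a * (y * z) = a * a * y * (a⁻¹ * z) := by
  have h : a * (y * z) * (a * z⁻¹) = a * a * y := by rw [ha, mul_inv_cancel_right]
  calc a * (y * z) = a * (y * z) * (a * z⁻¹) * (a * z⁻¹)⁻¹ := (mul_inv_cancel_right _ _).symm
    _ = a * a * y * (a⁻¹ * z) := by rw [h, mul_inv, inv_inv]

end InverseProperty

section ALoop

variable {Q : Type*} [CommIPALoop Q]

/-- The inner mapping `L_{xy}⁻¹ L_x L_y`. It measures the failure of associativity:
`x * (y * z) = x * y * innerAut x y z`. -/
def innerAut (x y : Q) : MulAut Q where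
  toFun z := (x * y)⁻¹ * (x * (y * z))
  invFun z := y⁻¹ * (x⁻¹ * (x * y * z))
  left_inv z := by simp only [mul_inv_cancel_left, inv_mul_cancel_left]
  right_inv z := by simp only [mul_inv_cancel_left, inv_mul_cancel_left]
  map_mul' := CommIPALoop.inner_map_mul x y

theorem innerAut_apply (x y z : Q) : innerAut x y z = (x * y)⁻¹ * (x * (y * z)) := rfl

theorem mul_mul_eq_mul_innerAut (x y z : Q) : x * (y * z) = x * y * innerAut x y z := by
  rw [innerAut_apply, mul_inv_cancel_left]

theorem innerAut_apply_left (x y : Q) : innerAut x y x = x := by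
  rw [innerAut_apply, mul_comm y, mul_comm x (x * y), inv_mul_cancel_left]

-- Inversion is an automorphism, so conjugation by it sends `F(x, y)` to `F(x⁻¹, y⁻¹)`; on the other
-- hand it commutes with every automorphism.
theorem innerAut_inv_inv (x y : Q) : innerAut x⁻¹ y⁻¹ = innerAut x y := by
  ext z
  calc innerAut x⁻¹ y⁻¹ z = (innerAut x y z⁻¹)⁻¹ := by simp only [innerAut_apply, mul_inv, inv_inv]
    _ = innerAut x y z := by rw [mulAut_map_inv, inv_inv]

theorem innerAut_apply_eq_mul_inv (x y z : Q) : innerAut x y z = x * y * (x⁻¹ * (y⁻¹ * z)) := by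
  rw [← innerAut_inv_inv, innerAut_apply, mul_inv, inv_inv, inv_inv]

theorem innerAut_apply_right (x y : Q) : innerAut x y y = y := by
  rw [innerAut_apply_eq_mul_inv, inv_mul_cancel, mul_one, mul_comm x, mul_inv_cancel_right]

theorem innerAut_apply_mul (x y : Q) : innerAut x y (x * y) = x * y := by
  rw [map_mul, innerAut_apply_left, innerAut_apply_right]

theorem innerAut_apply_mul_mul (x y z : Q) : innerAut x y (x * y * z) = x * (y * z) := by
  rw [map_mul, innerAut_apply_mul, ← mul_mul_eq_mul_innerAut]

theorem innerAut_apply_mul_mul_comm (x y z : Q) : innerAut x y (y * (x * z)) = x * y * z := by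
  rw [innerAut_apply_eq_mul_inv, inv_mul_cancel_left, inv_mul_cancel_left]

theorem innerAut_swap (x y : Q) : innerAut y x = (innerAut x y)⁻¹ := by
  rw [eq_inv_iff_mul_eq_one]
  ext z
  apply mul_left_cancel (a := x * y)
  rw [MulAut.mul_apply, MulAut.one_apply]
  calc x * y * innerAut y x (innerAut x y z)
      = innerAut y x (x * y * innerAut x y z) := by
        rw [map_mul _ (x * y), mul_comm x y, innerAut_apply_mul]
    _ = x * y * z := by
        rw [← mul_mul_eq_mul_innerAut, innerAut_apply_mul_mul_comm, mul_comm y]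

theorem mul_mul_eq_innerAut_sq (x y z : Q) : x * (y * z) = (innerAut x y ^ 2) (y * (x * z)) := by
  rw [pow_two, MulAut.mul_apply, innerAut_apply_mul_mul_comm, innerAut_apply_mul_mul]

theorem innerAut_sq_apply_left (x y : Q) : (innerAut x y ^ 2) x = x := by
  rw [pow_two, MulAut.mul_apply, innerAut_apply_left, innerAut_apply_left]

section Powers

theorem mul_self_mul (x y : Q) : x * (x * y) = x * x * y := by
  have h := mul_mul_eq_mul_innerAut y x x
  rw [innerAut_apply_right, mul_comm y, mul_comm y, mul_comm (x * y)] at h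
  exact h.symm

theorem cube_mul (x y : Q) : x * (x * x) * y = x * (x * x * y) := by
  calc x * (x * x) * y = y * (x * (x * x)) := mul_comm _ _
    _ = y * x * (x * x) := by rw [mul_mul_eq_mul_innerAut, map_mul, innerAut_apply_right]
    _ = x * (x * x * y) := by rw [mul_comm, ← mul_self_mul, mul_comm y, mul_self_mul x y]

theorem mul_sq (x y : Q) : x * y * (x * y) = x * x * (y * y) := by
  calc x * y * (x * y) = x * (y * (x * y)) := by
        rw [mul_mul_eq_mul_innerAut x y, innerAut_apply_mul]
    _ = x * x * (y * y) := by
        rw [mul_comm x y, mul_self_mul y, mul_comm _ x, mul_self_mul]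

theorem mul_cube (x y : Q) :
    x * y * (x * y * (x * y)) = x * (x * x) * (y * (y * y)) := by
  calc x * y * (x * y * (x * y)) = x * (y * (x * y * (x * y))) := by
        rw [mul_mul_eq_mul_innerAut x y, map_mul, innerAut_apply_mul]
    _ = x * (x * x * (y * (y * y))) := by
        rw [mul_sq, mul_comm (x * x), ← cube_mul, mul_comm (x * x)]
    _ = x * (x * x) * (y * (y * y)) := (cube_mul _ _).symm

theorem mul_sq_mul (x y z : Q) : x * (y * y * (x * z)) = x * x * (y * y) * z := by
  calc x * (y * y * (x * z)) = x * y * innerAut x y (y * (x * z)) := by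
        rw [← mul_self_mul, ← mul_mul_eq_mul_innerAut]
    _ = x * x * (y * y) * z := by rw [innerAut_apply_mul_mul_comm, mul_self_mul, mul_sq]

theorem eq_of_sq_eq_of_cube_eq {x y : Q} (hsq : x * x = y * y)
    (hcube : x * (x * x) = y * (y * y)) : x = y := by
  rw [hsq, mul_comm x, mul_comm y (y * y)] at hcube
  exact mul_left_cancel hcube

theorem moufang_sq (x y z : Q) :
    x * (y * (x * z)) * (x * (y * (x * z))) = x * y * x * z * (x * y * x * z) := by
  rw [mul_sq x (y * (x * z)), mul_sq y, mul_sq x z, mul_sq (x * y * x), mul_sq (x * y), mul_sq x y,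
    mul_sq_mul, mul_comm (x * x * (y * y)) (x * x), mul_self_mul (x * x)]

end Powers

section MoufangElements

/-- The automorphism `L_{xyx}⁻¹ L_x L_y L_x`; the Moufang identity says that it is trivial. -/
def moufangDefect (x y : Q) : MulAut Q :=
  innerAut (x * y) x * innerAut x y

theorem mul_mul_mul_eq_mul_moufangDefect (x y z : Q) :
    x * (y * (x * z)) = x * y * x * moufangDefect x y z := by
  rw [mul_mul_eq_mul_innerAut x y, map_mul, innerAut_apply_left,
    mul_mul_eq_mul_innerAut (x * y), moufangDefect, MulAut.mul_apply]

theorem moufangDefect_apply_left (x y : Q) : moufangDefect x y x = x := by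
  rw [moufangDefect, MulAut.mul_apply, innerAut_apply_left, innerAut_apply_right]

theorem moufangDefect_apply_sq (x y z : Q) : moufangDefect x y (z * z) = z * z := by
  have h := moufang_sq x y z
  rw [mul_mul_mul_eq_mul_moufangDefect, mul_sq, mul_sq _ z] at h
  rw [map_mul, mul_left_cancel h]

theorem mul_mul_mul_of_moufangDefect_eq {x y z : Q} (h : moufangDefect x (y * z) z = z) :
    x * y * (x * z) = x * x * (y * z) := by
  have key : x * y = x * x * (y * z) * (x * z)⁻¹ := by
    calc x * y = x * (y * z * (x * (x * z)⁻¹)) := by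
          rw [mul_inv, mul_inv_cancel_left, mul_inv_cancel_right]
      _ = x * (y * z) * x * moufangDefect x (y * z) (x * z)⁻¹ :=
          mul_mul_mul_eq_mul_moufangDefect _ _ _
      _ = x * x * (y * z) * (x * z)⁻¹ := by
          rw [mulAut_map_inv, map_mul, moufangDefect_apply_left, h, mul_comm _ x, mul_self_mul]
  rw [key, mul_comm _ (x * z), mul_comm _ (x * z)⁻¹, mul_inv_cancel_left]

-- `L_x L_y L_x` equals both `L_x L_{xy} F(y, x)` and `L_{xy} L_x F(x, y)`.
theorem innerAut_mul_right_sq (x y : Q) : innerAut x (x * y) ^ 2 = innerAut x y ^ 2 := by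
  have h : innerAut x (x * y) * (innerAut x y)⁻¹ = (innerAut x (x * y))⁻¹ * innerAut x y := by
    rw [← innerAut_swap x y, ← innerAut_swap x (x * y)]
    ext z
    apply mul_left_cancel (a := x * y * x)
    calc x * y * x * innerAut x (x * y) (innerAut y x z) = x * (y * (x * z)) := by
          rw [mul_comm _ x, ← mul_mul_eq_mul_innerAut x (x * y), mul_comm x y,
            ← mul_mul_eq_mul_innerAut y x]
      _ = x * y * x * moufangDefect x y z := mul_mul_mul_eq_mul_moufangDefect x y z
  rw [mul_inv_eq_iff_eq_mul, mul_assoc, ← pow_two, eq_inv_mul_iff_mul_eq, ← pow_two] at h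
  exact h

theorem innerAut_sq_mul_mul (x y z : Q) :
    (innerAut x z ^ 2) (x * y * (x * z)) = x * (y * (x * z)) := by
  rw [mul_comm y, mul_mul_eq_innerAut_sq x (x * z) y, innerAut_mul_right_sq, mul_comm (x * z)]

theorem isMoufang_sq (w : Q) : IsMoufang (w * w) := by
  intro x y
  have hsq := mul_mul_mul_of_moufangDefect_eq (moufangDefect_apply_sq x (y * (w * w)) w)
  generalize w * w = s at hsq ⊢
  have horbit : (innerAut x s ^ 2) (x * (y * s)) = y * (x * s) := by
    apply mul_left_cancel (a := x)
    rw [← innerAut_sq_mul_mul x y s, hsq, ← mul_self_mul, map_mul _ x (x * (y * s)),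
      innerAut_sq_apply_left]
  have hcycle : innerAut s x (s * (x * y)) = x * (s * y) := by
    rw [innerAut_swap, MulAut.inv_apply, MulEquiv.symm_apply_eq]
    apply (innerAut x s).injective
    rw [innerAut_apply_mul_mul_comm, mul_comm s y, ← MulAut.mul_apply, ← pow_two,
      horbit, mul_comm]
  have : innerAut s x (s * x * (s * y)) = innerAut s x (s * (s * (x * y))) := by
    rw [innerAut_apply_mul_mul, map_mul _ s, innerAut_apply_left, hcycle]
  rw [(innerAut s x).injective this, mul_self_mul]

theorem IsMoufang.cube_mem_center {a : Q} (ha : IsMoufang a) :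
    a * (a * a) ∈ Set.center Q := by
  have hcube : ∀ y : Q, a * a * (a * y) = a * (a * a) * y := fun y ↦ by
    rw [cube_mul, ← mul_self_mul, ← mul_self_mul]
  have hmid : ∀ y z : Q, a * (a * a) * y * z = y * (a * (a * a) * z) := fun y z ↦ by
    calc a * (a * a) * y * z = a * a * (a * y) * (a⁻¹ * (a * z)) := by
          rw [hcube, inv_mul_cancel_left]
      _ = a * a * (a * z) * (a⁻¹ * (a * y)) := by
          rw [← ha.mul_mul_eq, mul_comm (a * y), ha.mul_mul_eq]
      _ = y * (a * (a * a) * z) := by rw [hcube, inv_mul_cancel_left, mul_comm]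
  have htriv : ∀ y : Q, innerAut y (a * (a * a)) = 1 := fun y ↦ by
    ext z
    rw [innerAut_apply, ← hmid, mul_comm y, inv_mul_cancel_left, MulAut.one_apply]
  refine mem_center_of_mul_assoc_left fun y z ↦ ?_
  rw [mul_mul_eq_mul_innerAut, innerAut_swap, htriv, inv_one, MulAut.one_apply]

theorem cube_sq_mem_center (x : Q) : x * (x * x) * (x * (x * x)) ∈ Set.center Q := by
  rw [mul_sq, mul_sq]
  exact (isMoufang_sq x).cube_mem_center

end MoufangElements

section CentralSquares

theorem innerAut_apply_of_mem_center (x y : Q) {c : Q} (hc : c ∈ Set.center Q) :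
    innerAut x y c = c := by
  rw [innerAut_apply, ← hc.right_assoc, inv_mul_cancel_left]

variable {x y z : Q}

theorem innerAut_mul_right_of_sq_mem_center (hx : x * x ∈ Set.center Q) (y : Q) :
    innerAut x (x * y) = (innerAut x y)⁻¹ := by
  rw [eq_inv_iff_mul_eq_one]
  ext z
  apply mul_left_cancel (a := x * (x * y))
  rw [MulAut.mul_apply, ← mul_mul_eq_mul_innerAut, ← mul_mul_eq_mul_innerAut,
    mul_self_mul, hx.left_assoc, ← mul_self_mul x y, MulAut.one_apply]

theorem innerAut_pow_four (hx : x * x ∈ Set.center Q) (y : Q) : innerAut x y ^ 4 = 1 := by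
  have h := innerAut_mul_right_sq x y
  rw [innerAut_mul_right_of_sq_mem_center hx, inv_pow, inv_eq_iff_mul_eq_one, ← pow_add] at h
  exact h

/-- The image of `x * (y * z)` under `innerAut x y`. When `x * x` is central, `innerAut x y`
permutes `y * (x * z)`, `x * y * z`, `x * (y * z)`, `fourthPoint x y z` cyclically, in this
order. -/
def fourthPoint (x y z : Q) : Q :=
  innerAut x y (x * (y * z))

theorem innerAut_fourthPoint (hx : x * x ∈ Set.center Q) (y z : Q) :
    innerAut x y (fourthPoint x y z) = y * (x * z) := by
  calc innerAut x y (fourthPoint x y z) = (innerAut x y ^ 2) (x * (y * z)) := rfl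
    _ = (innerAut x y ^ 4) (y * (x * z)) := by rw [mul_mul_eq_innerAut_sq x y]; rfl
    _ = y * (x * z) := by rw [innerAut_pow_four hx, MulAut.one_apply]

theorem fourthPoint_swap (hx : x * x ∈ Set.center Q) (y z : Q) :
    fourthPoint y x z = fourthPoint x y z := by
  rw [fourthPoint, innerAut_swap x y, ← innerAut_fourthPoint hx, MulAut.inv_apply_self]

theorem mul_mul_mul_eq_mul_fourthPoint (hx : x * x ∈ Set.center Q) (y z : Q) :
    x * y * (x * z) = x * fourthPoint x y z := by
  apply (innerAut x y).injective
  rw [innerAut_apply_mul_mul, map_mul, innerAut_apply_left, innerAut_fourthPoint hx]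

theorem fourthPoint_rotate (hx : x * x ∈ Set.center Q) (y z : Q) :
    fourthPoint z x y = fourthPoint x y z := by
  have h : (innerAut x z ^ 2) (fourthPoint x y z) = y * (x * z) := by
    apply mul_left_cancel (a := x)
    rw [← innerAut_sq_mul_mul x y z, mul_mul_mul_eq_mul_fourthPoint hx, map_mul _ x,
      innerAut_sq_apply_left]
  rw [fourthPoint, innerAut_swap, MulAut.inv_apply, MulEquiv.symm_apply_eq]
  apply (innerAut x z).injective
  rw [innerAut_apply_mul_mul_comm, ← MulAut.mul_apply, ← pow_two, h, mul_comm]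

theorem innerAut_mul_apply_innerAut_sq (hx : x * x ∈ Set.center Q) (hy : y * y ∈ Set.center Q)
    (z : Q) : innerAut x (y * z) ((innerAut x y ^ 2) z) = z := by
  have hxy : x * y * (x * y) ∈ Set.center Q := mul_sq x y ▸ Set.mul_mem_center hx hy
  have hright : y * (x * (x * (y * z))) = x * y * (x * y) * z := by
    rw [mul_self_mul x, ← hx.left_comm y, mul_self_mul y, hx.left_assoc, ← mul_sq]
  have hleft : x * (y * (x * (y * z))) = x * y * (x * y) * (innerAut x y ^ 2) z := by
    rw [mul_mul_eq_innerAut_sq x y, hright, map_mul, pow_two, MulAut.mul_apply,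
      innerAut_apply_of_mem_center _ _ hxy, innerAut_apply_of_mem_center _ _ hxy]
  have hinner : innerAut x (y * z) = innerAut (x * (y * z)) x := by
    rw [innerAut_swap x, innerAut_mul_right_of_sq_mem_center hx, inv_inv]
  apply mul_left_cancel (a := x * y * (x * y))
  calc x * y * (x * y) * innerAut x (y * z) ((innerAut x y ^ 2) z)
      = innerAut x (y * z) (x * (y * (x * (y * z)))) := by
        rw [hleft, map_mul _ (x * y * (x * y)), innerAut_apply_of_mem_center _ _ hxy]
    _ = y * (x * (x * (y * z))) := by
        rw [hinner, mul_comm y (x * (y * z)), innerAut_apply_mul_mul_comm, mul_comm _ x, mul_comm]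
    _ = x * y * (x * y) * z := hright

theorem innerAut_sq_mul_eq_mul_fourthPoint (hx : x * x ∈ Set.center Q)
    (hy : y * y ∈ Set.center Q) (hz : z * z ∈ Set.center Q) :
    (innerAut x y ^ 2) z * (x * (y * z)) = z * fourthPoint x y z := by
  apply (innerAut x (y * z)).injective
  calc innerAut x (y * z) ((innerAut x y ^ 2) z * (x * (y * z)))
      = x * (y * z) * z := by
        rw [map_mul, innerAut_mul_apply_innerAut_sq hx hy, innerAut_apply_mul, mul_comm]
    _ = innerAut x (y * z) (z * y * (z * x)) := by
        rw [← innerAut_apply_mul_mul_comm, mul_comm y, mul_comm x]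
    _ = innerAut x (y * z) (z * fourthPoint x y z) := by
        rw [mul_mul_mul_eq_mul_fourthPoint hz, fourthPoint_swap hy, ← fourthPoint_rotate hy z x]

theorem mul_left_comm_of_sq_mem_center (hx : x * x ∈ Set.center Q)
    (hy : y * y ∈ Set.center Q) (hz : z * z ∈ Set.center Q) :
    x * (y * z) = y * (x * z) := by
  have hsq : innerAut y x ^ 2 = innerAut x y ^ 2 := by
    rw [innerAut_swap, inv_pow, inv_eq_iff_mul_eq_one, ← pow_add, innerAut_pow_four hx]
  apply mul_left_cancel (a := (innerAut x y ^ 2) z)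
  rw [innerAut_sq_mul_eq_mul_fourthPoint hx hy hz, ← hsq,
    innerAut_sq_mul_eq_mul_fourthPoint hy hx hz, fourthPoint_swap hx]

theorem moufang_of_sq_mem_center (hx : x * x ∈ Set.center Q)
    (hy : y * y ∈ Set.center Q) (hz : z * z ∈ Set.center Q) :
    x * (y * (x * z)) = x * y * x * z := by
  calc x * (y * (x * z)) = x * (x * (y * z)) := by rw [mul_left_comm_of_sq_mem_center hx hy hz]
    _ = x * y * x * z := by rw [mul_self_mul, hx.left_assoc, ← mul_self_mul, mul_comm x (x * y)]

end CentralSquares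

theorem moufang_cube (x y z : Q) :
    x * (y * (x * z)) * (x * (y * (x * z)) * (x * (y * (x * z)))) =
      x * y * x * z * (x * y * x * z * (x * y * x * z)) := by
  simp only [mul_cube]
  exact moufang_of_sq_mem_center (cube_sq_mem_center x) (cube_sq_mem_center y)
    (cube_sq_mem_center z)

theorem moufang (x y z : Q) : x * (y * (x * z)) = x * y * x * z :=
  eq_of_sq_eq_of_cube_eq (moufang_sq x y z) (moufang_cube x y z)

end ALoop

end CommIPLoop

/-- The commutative inverse property A-loop on `Q` with multiplication `mul`, left division `ld` and
neutral element `e`. -/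
abbrev CommIPALoop.ofLeftDivision {Q : Type*} (mul ld : Q → Q → Q) (e : Q)
    (h1 : ∀ x y, ld x (mul x y) = y) (h2 : ∀ x y, mul x (ld x y) = y)
    (hL : ∀ x, mul e x = x) (hcomm : ∀ x y, mul x y = mul y x)
    (hIP : ∀ x y, mul (ld x e) (mul x y) = y)
    (hA : ∀ φ ∈ Subgroup.closure (Set.range (leftTr mul ld h1 h2)),
      φ e = e → ∀ a b, φ (mul a b) = mul (φ a) (φ b)) : CommIPALoop Q where
  mul := mul
  one := e
  inv x := ld x e
  mul_comm := hcomm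
  one_mul := hL
  mul_one x := (hcomm x e).trans (hL x)
  inv_mul_cancel_left := hIP
  inner_map_mul x y a b := by
    let L := leftTr mul ld h1 h2
    let φ : Equiv.Perm Q := (L (mul x y))⁻¹ * (L x * L y)
    have hL_mem : ∀ u, L u ∈ Subgroup.closure (Set.range L) :=
      fun u ↦ Subgroup.subset_closure ⟨u, rfl⟩
    have hφ_mem : φ ∈ Subgroup.closure (Set.range L) :=
      mul_mem (inv_mem (hL_mem _)) (mul_mem (hL_mem _) (hL_mem _))
    have hld : ∀ u v, ld u v = mul (ld u e) v := fun u v ↦ by rw [← hIP u (ld u v), h2]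
    have hφ : ∀ z, φ z = mul (ld (mul x y) e) (mul x (mul y z)) := fun z ↦ hld _ _
    have hφ_one : φ e = e := by rw [hφ, hcomm y, hL, hcomm, h2]
    have := hA φ hφ_mem hφ_one a b
    simp only [hφ] at this
    exact this

theorem ld_one_mul_cancel_of_diassociative {Q : Type*} {mul ld rd : Q → Q → Q} {e : Q}
    (h2 : ∀ x y, mul x (ld x y) = y) (hL : ∀ x, mul e x = x) (hcomm : ∀ x y, mul x y = mul y x)
    (hD : ∀ a b : Q, ∀ x ∈ genSubloop mul ld rd e a b, ∀ y ∈ genSubloop mul ld rd e a b,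
      ∀ z ∈ genSubloop mul ld rd e a b, mul x (mul y z) = mul (mul x y) z) (x y : Q) :
    mul (ld x e) (mul x y) = y := by
  have hx : x ∈ genSubloop mul ld rd e x y := fun _ hT ↦ hT.1
  have hy : y ∈ genSubloop mul ld rd e x y := fun _ hT ↦ hT.2.1
  have hinv : ld x e ∈ genSubloop mul ld rd e x y :=
    fun _ hT ↦ hT.2.2.2.2.1 x hT.1 e hT.2.2.1
  rw [hD x y _ hinv x hx y hy, hcomm _ x, h2, hL]

theorem commutative_diassociative_Aloop_is_moufang_general {Q : Type*} (mul ld : Q → Q → Q) (e : Q)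
    (h1 : ∀ x y, ld x (mul x y) = y) (h2 : ∀ x y, mul x (ld x y) = y)
    (hL : ∀ x, mul e x = x) (hcomm : ∀ x y, mul x y = mul y x)
    (hIP : ∀ x y, mul (ld x e) (mul x y) = y)
    (hA : ∀ φ ∈ Subgroup.closure (Set.range (leftTr mul ld h1 h2)),
      φ e = e → ∀ a b, φ (mul a b) = mul (φ a) (φ b)) (x y z : Q) :
    mul x (mul y (mul x z)) = mul (mul (mul x y) x) z :=
  letI := CommIPALoop.ofLeftDivision mul ld e h1 h2 hL hcomm hIP hA
  CommIPLoop.moufang x y z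

/-- Osborn: every commutative diassociative A-loop is Moufang. -/
theorem commutative_diassociative_Aloop_is_moufang (Q : Type*) (mul ld rd : Q → Q → Q) (e : Q)
    (hQ1 : ∀ x y, ld x (mul x y) = y) (hQ2 : ∀ x y, mul x (ld x y) = y)
    (hQ3 : ∀ x y, rd (mul x y) y = x) (hQ4 : ∀ x y, mul (rd x y) y = x)
    (hL : ∀ x, mul e x = x) (hR : ∀ x, mul x e = x)
    (hcomm : ∀ x y, mul x y = mul y x)
    -- A-loop: every inner mapping (element of Mlt(Q) fixing e) is an automorphism
    (hA : ∀ φ ∈ Subgroup.closure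
        (Set.range (leftTr mul ld hQ1 hQ2) ∪ Set.range (rightTr mul rd hQ3 hQ4)),
      φ e = e → ∀ a b : Q, φ (mul a b) = mul (φ a) (φ b))
    -- diassociativity: every 2-generated subloop is associative (hence a group)
    (hD : ∀ a b : Q, ∀ x ∈ genSubloop mul ld rd e a b, ∀ y ∈ genSubloop mul ld rd e a b,
      ∀ z ∈ genSubloop mul ld rd e a b, mul x (mul y z) = mul (mul x y) z) :
    ∀ x y z, mul x (mul y (mul x z)) = mul (mul (mul x y) x) z :=
  commutative_diassociative_Aloop_is_moufang_general mul ld e hQ1 hQ2 hL hcomm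
    (ld_one_mul_cancel_of_diassociative hQ2 hL hcomm hD)
    fun φ hφ ↦ hA φ (Subgroup.closure_mono Set.subset_union_left hφ)
end

section
/- If $Q$ is a power-associative conjugacy closed loop, then $Q/N(Q)$ is an abelian group of exponent dividing 12, where $N(Q)$ is the nucleus of $Q$. -/
/-- The nucleus of a loop: elements associating with all pairs of elements. -/
def nucleus {Q : Type*} (mul : Q → Q → Q) : Set Q :=
  {a | ∀ x y : Q, mul a (mul x y) = mul (mul a x) y ∧
       mul x (mul a y) = mul (mul x a) y ∧
       mul x (mul y a) = mul (mul x y) a}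

/-- The subloop generated by a single element `a`. -/
def genSubloop1 {Q : Type*} (mul ld rd : Q → Q → Q) (e a : Q) : Set Q :=
  ⋂₀ {T : Set Q | a ∈ T ∧ e ∈ T ∧
    (∀ x ∈ T, ∀ y ∈ T, mul x y ∈ T) ∧
    (∀ x ∈ T, ∀ y ∈ T, ld x y ∈ T) ∧
    (∀ x ∈ T, ∀ y ∈ T, rd x y ∈ T)}

/-- Left-bracketed powers: `x^0 = e`, `x^(n+1) = x * x^n`. -/
def lpow {Q : Type*} (mul : Q → Q → Q) (e x : Q) : ℕ → Q
  | 0 => e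
  | n + 1 => mul x (lpow mul e x n)

/-!
In a conjugacy closed loop `(R x⁻¹ L x, L x, L x)` and `(R x, L x⁻¹ R x, R x)` are autotopisms.
Conjugating the first kind by the second kind and comparing with the first kind yields
`x * y / x ≡ y` modulo the nucleus `N`, so `Q / N` is commutative; left conjugacy closedness then
reads `x (z u) ≡ z (x u)`, so `Q / N` is an abelian group.

Hence associators lie in `N`. The inner maps `L (x y)⁻¹ L x L y` are automorphisms fixing `N`
pointwise, so the associators are even central in `N`, and as a function `α` into `Z(N)`, on which
`Q` acts by conjugation, the associator is symmetric and a crossed homomorphism in each variable.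
Expanding `α (x y) (x y) (x y) = 0` gives `3 (α x x y + α x y y) = 0`; replacing `y` by `y²` gives
`6 α x y y = 0`, and polarizing gives `12 α x y z = 0`. Finally
`α y z xⁿ = n α y z x + (n choose 2) b` with `6 b = 0`, which vanishes for `n = 12`.
-/

open Equiv (Perm)

section Autotopism

/-- The group of autotopisms of a magma: the triples of permutations `(A, B, C)` with
`A x * B y = C (x * y)`, multiplied componentwise. -/
def autotopismGroup (Q : Type*) [Mul Q] : Subgroup (Perm Q × Perm Q × Perm Q) where
  carrier := {t | ∀ x y, t.1 x * t.2.1 y = t.2.2 (x * y)}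
  one_mem' _ _ := rfl
  mul_mem' {s t} hs ht x y := by
    simp only [Prod.fst_mul, Prod.snd_mul, Perm.mul_apply, hs _ _, ht _ _]
  inv_mem' {t} ht x y := by
    apply t.2.2.injective
    simp [← ht _ _]

variable {Q : Type*} [MulOneClass Q] {A B C : Perm Q}

theorem autotopism_fst_eq_thd (h : (A, B, C) ∈ autotopismGroup Q) (hB : B 1 = 1) : A = C := by
  ext x
  simpa [hB] using h x 1

theorem autotopism_snd_eq_thd (h : (A, B, C) ∈ autotopismGroup Q) (hA : A 1 = 1) : B = C := by
  ext y
  simpa [hA] using h 1 y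

end Autotopism

/-- The nucleus of a unital magma, as a submonoid. -/
def nucleusSubmonoid (Q : Type*) [MulOneClass Q] : Submonoid Q where
  carrier := nucleus (· * ·)
  one_mem' x y := by simp
  mul_mem' {a b} ha hb x y := by
    simp only [nucleus, Set.mem_ofPred_eq] at ha hb ⊢
    refine ⟨?_, ?_, ?_⟩
    · rw [← (ha b _).1, ← (ha b x).1, (hb x y).1, (ha _ y).1]
    · rw [← (ha b y).1, (ha x _).2.1, (hb _ y).2.1, (hb x a).2.2]
    · rw [(hb y a).2.2, (hb x _).2.2, (ha x y).2.2, (hb _ a).2.2]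

section Nucleus

variable {Q : Type*} [MulOneClass Q]

theorem nucleus_mul_assoc_left (a : nucleusSubmonoid Q) (x y : Q) : a * x * y = a * (x * y) :=
  (a.2 x y).1.symm

theorem nucleus_mul_assoc_mid (a : nucleusSubmonoid Q) (x y : Q) : x * a * y = x * (a * y) :=
  (a.2 x y).2.1.symm

theorem nucleus_mul_assoc_right (a : nucleusSubmonoid Q) (x y : Q) : x * y * a = x * (y * a) :=
  (a.2 x y).2.2.symm

end Nucleus

/-- A loop: a unital magma in which `x * · = y` and `· * x = y` have unique solutions, the left
quotient `ldiv x y` and the right quotient `y / x`. -/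
class Loop (Q : Type*) extends MulOneClass Q, Div Q where
  ldiv : Q → Q → Q
  ldiv_mul : ∀ x y : Q, ldiv x (x * y) = y
  mul_ldiv : ∀ x y : Q, x * ldiv x y = y
  mul_rdiv : ∀ x y : Q, x * y / y = x
  rdiv_mul : ∀ x y : Q, x / y * y = x

local infixl:70 "⧵" => Loop.ldiv

namespace Loop

attribute [simp] ldiv_mul mul_ldiv mul_rdiv rdiv_mul

variable {Q : Type*} [Loop Q]

instance : IsCancelMul Q where
  mul_left_cancel x y z h := by
    rw [← ldiv_mul x y, ← ldiv_mul x z]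
    exact congrArg _ h
  mul_right_cancel x y z h := by
    rw [← mul_rdiv y x, ← mul_rdiv z x]
    exact congrArg (· / x) h

@[simp]
theorem ldiv_self (x : Q) : x ⧵ x = 1 := by
  simpa using ldiv_mul x 1

@[simp]
theorem div_self (x : Q) : x / x = 1 := by
  simpa using mul_rdiv 1 x

/-- Left translation `y ↦ x * y`. -/
def L (x : Q) : Perm Q := ⟨(x * ·), (x ⧵ ·), ldiv_mul x, mul_ldiv x⟩

/-- Right translation `y ↦ y * x`. -/
def R (x : Q) : Perm Q := ⟨(· * x), (· / x), (mul_rdiv · x), (rdiv_mul · x)⟩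

@[simp]
theorem L_apply (x y : Q) : L x y = x * y := rfl

@[simp]
theorem R_apply (x y : Q) : R x y = y * x := rfl

@[simp]
theorem L_symm_apply (x y : Q) : (L x).symm y = x ⧵ y := rfl

@[simp]
theorem R_symm_apply (x y : Q) : (R x).symm y = y / x := rfl

@[simp]
theorem L_one : L (1 : Q) = 1 := by
  ext
  simp

theorem eq_L_of_autotopism {A C : Perm Q} (h : (A, 1, C) ∈ autotopismGroup Q) : C = L (C 1) := by
  ext x
  simpa [autotopism_fst_eq_thd h rfl] using (h 1 x).symm

theorem eq_R_of_autotopism {B C : Perm Q} (h : (1, B, C) ∈ autotopismGroup Q) : C = R (C 1) := by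
  ext x
  simpa [autotopism_snd_eq_thd h rfl] using (h x 1).symm

theorem mem_nucleus_iff_autotopisms {a : Q} :
    a ∈ nucleusSubmonoid Q ↔ (L a, 1, L a) ∈ autotopismGroup Q ∧
      ((R a)⁻¹, L a, 1) ∈ autotopismGroup Q ∧ (1, R a, R a) ∈ autotopismGroup Q := by
  refine ⟨fun ha => ⟨fun x y => (ha x y).1.symm, fun x y => ?_, fun x y => (ha x y).2.2⟩,
    fun ⟨hleft, hmid, hright⟩ x y => ⟨(hleft x y).symm, ?_, hright x y⟩⟩
  · simpa using (ha (x / a) y).2.1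
  · simpa using hmid (x * a) y

theorem ldiv_one_mul (a : nucleusSubmonoid Q) : (a : Q) ⧵ 1 * a = 1 := by
  apply mul_left_cancel (a := (a : Q))
  rw [← nucleus_mul_assoc_left]
  simp

theorem ldiv_one_mem_nucleus (a : nucleusSubmonoid Q) : (a : Q) ⧵ 1 ∈ nucleusSubmonoid Q := by
  refine fun x y => ⟨?_, ?_, ?_⟩ <;> dsimp only
  · apply mul_left_cancel (a := (a : Q))
    simp [← nucleus_mul_assoc_left]
  · have hy : y = a * ((a : Q) ⧵ 1 * y) := by simp [← nucleus_mul_assoc_left]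
    conv_rhs => rw [hy]
    rw [← nucleus_mul_assoc_mid, nucleus_mul_assoc_right, ldiv_one_mul, mul_one]
  · apply mul_right_cancel (b := (a : Q))
    simp only [nucleus_mul_assoc_right, ldiv_one_mul, mul_one]

instance : Group (nucleusSubmonoid Q) where
  mul_assoc a b c := Subtype.ext (nucleus_mul_assoc_left a b c)
  one_mul := one_mul
  mul_one := mul_one
  inv a := ⟨(a : Q) ⧵ 1, ldiv_one_mem_nucleus a⟩
  inv_mul_cancel a := Subtype.ext (ldiv_one_mul a)

/-- The center of the nucleus, in which the associators of a conjugacy closed loop lie. -/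
abbrev nucleusCenter (Q : Type*) [Loop Q] : Subgroup (nucleusSubmonoid Q) := Subgroup.center _

/-- The left inner map `L (x * y)⁻¹ L x L y`, which measures the failure of associativity. -/
def leftInner (x y : Q) : Perm Q := (L (x * y))⁻¹ * (L x * L y)

theorem mul_leftInner (x y z : Q) : x * y * leftInner x y z = x * (y * z) :=
  mul_ldiv _ _

theorem leftInner_nucleus (x y : Q) (n : nucleusSubmonoid Q) : leftInner x y n = n := by
  apply mul_left_cancel (a := x * y)
  rw [mul_leftInner, nucleus_mul_assoc_right]

end Loop

open Loop

/-- A conjugacy closed loop: the left translations are closed under conjugation by left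
translations, and the right translations under conjugation by right translations. -/
class CCLoop (Q : Type*) [Loop Q] : Prop where
  exists_L_conj : ∀ x y : Q, ∃ z, ∀ u, x ⧵ (y * (x * u)) = z * u
  exists_R_conj : ∀ x y : Q, ∃ z, ∀ u, u * x * y / x = u * z

namespace CCLoop

variable {Q : Type*} [Loop Q] [CCLoop Q]

theorem mul_left_conj (x z u : Q) : x * z / x * (x * u) = x * (z * u) := by
  obtain ⟨w, hw⟩ := exists_L_conj x (x * z / x)
  obtain rfl : z = w := by simpa using hw 1
  rw [← hw, mul_ldiv]

theorem mul_right_conj (x z u : Q) : u * x * (x ⧵ (z * x)) = u * z * x := by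
  obtain ⟨w, hw⟩ := exists_R_conj x (x ⧵ (z * x))
  obtain rfl : z = w := by simpa using hw 1
  rw [← hw, rdiv_mul]

theorem lcc_autotopism (x : Q) : ((R x)⁻¹ * L x, L x, L x) ∈ autotopismGroup Q :=
  mul_left_conj x

theorem rcc_autotopism (x : Q) : (R x, (L x)⁻¹ * R x, R x) ∈ autotopismGroup Q :=
  fun u z => mul_right_conj x z u

section Normality

theorem mid_autotopism_iff_left {a : Q} :
    ((R a)⁻¹, L a, 1) ∈ autotopismGroup Q ↔ (L a, 1, L a) ∈ autotopismGroup Q := by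
  have product : ((R a)⁻¹, L a, 1) * (L a, 1, L a) ∈ autotopismGroup Q := lcc_autotopism a
  exact ⟨fun hmid => (mul_mem_cancel_left hmid).1 product,
    fun hleft => (mul_mem_cancel_right hleft).1 product⟩

theorem mid_autotopism_iff_right {a : Q} :
    ((R a)⁻¹, L a, 1) ∈ autotopismGroup Q ↔ (1, R a, R a) ∈ autotopismGroup Q := by
  have product : ((R a)⁻¹, L a, 1)⁻¹ * (1, R a, R a) ∈ autotopismGroup Q := rcc_autotopism a
  exact ⟨fun hmid => (mul_mem_cancel_left (inv_mem hmid)).1 product,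
    fun hright => inv_mem_iff.1 ((mul_mem_cancel_right hright).1 product)⟩

theorem mem_nucleus_iff_left_autotopism {a : Q} :
    a ∈ nucleusSubmonoid Q ↔ (L a, 1, L a) ∈ autotopismGroup Q := by
  rw [mem_nucleus_iff_autotopisms, ← mid_autotopism_iff_right, mid_autotopism_iff_left]
  tauto

theorem mem_nucleus_iff_right_autotopism {a : Q} :
    a ∈ nucleusSubmonoid Q ↔ (1, R a, R a) ∈ autotopismGroup Q := by
  rw [mem_nucleus_iff_autotopisms, ← mid_autotopism_iff_left, mid_autotopism_iff_right]
  tauto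

theorem apply_one_mem_nucleus_of_snd_eq_one {A C : Perm Q}
    (h : (A, 1, C) ∈ autotopismGroup Q) : C 1 ∈ nucleusSubmonoid Q := by
  rw [mem_nucleus_iff_left_autotopism, ← eq_L_of_autotopism h]
  rwa [autotopism_fst_eq_thd h rfl] at h

theorem apply_one_mem_nucleus_of_fst_eq_one {B C : Perm Q}
    (h : (1, B, C) ∈ autotopismGroup Q) : C 1 ∈ nucleusSubmonoid Q := by
  rw [mem_nucleus_iff_right_autotopism, ← eq_R_of_autotopism h]
  rwa [autotopism_snd_eq_thd h rfl] at h

theorem left_conj_mem_nucleus (x : Q) (a : nucleusSubmonoid Q) :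
    x * a / x ∈ nucleusSubmonoid Q := by
  have conj := mul_mem (mul_mem (lcc_autotopism x) (mem_nucleus_iff_left_autotopism.1 a.2))
    (inv_mem (lcc_autotopism x))
  simp only [Prod.mk_mul_mk, Prod.inv_mk, mul_one, mul_inv_cancel] at conj
  simpa [← autotopism_fst_eq_thd conj rfl] using apply_one_mem_nucleus_of_snd_eq_one conj

theorem right_conj_mem_nucleus (x : Q) (a : nucleusSubmonoid Q) :
    x ⧵ (a * x) ∈ nucleusSubmonoid Q := by
  have conj := mul_mem (mul_mem (rcc_autotopism x) (mem_nucleus_iff_right_autotopism.1 a.2))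
    (inv_mem (rcc_autotopism x))
  simp only [Prod.mk_mul_mk, Prod.inv_mk, mul_one, mul_inv_cancel] at conj
  simpa [← autotopism_snd_eq_thd conj rfl] using apply_one_mem_nucleus_of_fst_eq_one conj

/-- Conjugation `a ↦ x ⧵ (a * x)` as an automorphism of the nucleus. -/
def nucleusConj (x : Q) : nucleusSubmonoid Q ≃* nucleusSubmonoid Q where
  toFun a := ⟨x ⧵ (a * x), right_conj_mem_nucleus x a⟩
  invFun a := ⟨x * a / x, left_conj_mem_nucleus x a⟩
  left_inv a := by simp
  right_inv a := by simp
  map_mul' a b := by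
    ext
    apply mul_left_cancel (a := x)
    have hb := nucleus_mul_assoc_right ⟨_, right_conj_mem_nucleus x b⟩
    dsimp only at hb
    simp only [Submonoid.coe_mul, mul_ldiv, ← hb, nucleus_mul_assoc_left]

theorem mul_nucleusConj (x : Q) (a : nucleusSubmonoid Q) : x * nucleusConj x a = a * x :=
  mul_ldiv x _

theorem nucleusConj_symm_mul (x : Q) (a : nucleusSubmonoid Q) :
    (nucleusConj x).symm a * x = x * a :=
  rdiv_mul _ x

/-- Congruence modulo the nucleus, in terms of its (left = right) cosets `y * N`. -/
def nucleusCon (Q : Type*) [Loop Q] [CCLoop Q] : Con Q where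
  r x y := ∃ n : nucleusSubmonoid Q, x = y * n
  iseqv :=
    { refl := fun x => ⟨1, by simp⟩
      symm := by
        rintro x y ⟨n, rfl⟩
        refine ⟨n⁻¹, ?_⟩
        rw [nucleus_mul_assoc_mid, ← Submonoid.coe_mul, mul_inv_cancel, Submonoid.coe_one, mul_one]
      trans := by
        rintro x y z ⟨n, rfl⟩ ⟨m, rfl⟩
        exact ⟨m * n, nucleus_mul_assoc_mid _ _ _⟩ }
  mul' := by
    rintro _ x _ y ⟨n, rfl⟩ ⟨m, rfl⟩
    refine ⟨nucleusConj y n * m, ?_⟩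
    rw [nucleus_mul_assoc_mid, ← nucleus_mul_assoc_right m, ← mul_nucleusConj,
      nucleus_mul_assoc_mid, ← Submonoid.coe_mul, nucleus_mul_assoc_right]

theorem nucleusCon_nucleus_mul (n : nucleusSubmonoid Q) (x : Q) : nucleusCon Q (n * x) x :=
  ⟨nucleusConj x n, (mul_nucleusConj x n).symm⟩

end Normality

section Quotient

theorem R_mul_L (x u : Q) : R x * L u = L (u * x) * ((L x)⁻¹ * R x) := by
  ext z
  exact (rcc_autotopism x u z).symm

theorem L_conj_rcc_autotopism (x u : Q) :
    ((L x)⁻¹ * R x)⁻¹ * L u * ((L x)⁻¹ * R x) = (L (1 / x))⁻¹ * L (u / x) := by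
  have hx : R x * L (1 / x) = (L x)⁻¹ * R x := by simpa using R_mul_L x (1 / x)
  have hu : R x * L (u / x) = L u * ((L x)⁻¹ * R x) := by simpa using R_mul_L x (u / x)
  rw [mul_assoc, ← hu, ← hx]
  group

theorem exists_nucleus_R_conj_L (x u : Q) : ∃ n : nucleusSubmonoid Q,
    (R x)⁻¹ * L u * R x = L (n : Q) * ((L (1 / x))⁻¹ * L (u / x)) := by
  have conj := mul_mem (mul_mem (inv_mem (rcc_autotopism x)) (lcc_autotopism u))
    (rcc_autotopism x)
  have ratio := mul_mem conj
    (inv_mem (mul_mem (inv_mem (lcc_autotopism (1 / x))) (lcc_autotopism (u / x))))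
  simp only [Prod.mk_mul_mk, Prod.inv_mk] at ratio
  rw [L_conj_rcc_autotopism, mul_inv_cancel] at ratio
  exact ⟨⟨_, apply_one_mem_nucleus_of_snd_eq_one ratio⟩,
    mul_inv_eq_iff_eq_mul.1 (eq_L_of_autotopism ratio)⟩

theorem nucleusCon_R_conj_L (x u v : Q) :
    nucleusCon Q (u * (v * x) / x) ((1 / x) ⧵ (u / x * v)) := by
  obtain ⟨n, hn⟩ := exists_nucleus_R_conj_L x u
  have hv : u * (v * x) / x = n * ((1 / x) ⧵ (u / x * v)) := DFunLike.congr_fun hn v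
  rw [hv]
  exact nucleusCon_nucleus_mul n _

theorem nucleusCon_left_conj (x y : Q) : nucleusCon Q (x * y / x) y := by
  have hx : nucleusCon Q (x * y / x) ((1 / x) ⧵ (y / x)) := by
    simpa using nucleusCon_R_conj_L x x (y / x)
  have hy : nucleusCon Q y ((1 / x) ⧵ (y / x)) := by
    simpa using nucleusCon_R_conj_L x y 1
  exact (nucleusCon Q).trans hx ((nucleusCon Q).symm hy)

theorem nucleusCon_mul_comm (x y : Q) : nucleusCon Q (x * y) (y * x) := by
  simpa using (nucleusCon Q).mul (nucleusCon_left_conj x y) ((nucleusCon Q).refl x)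

theorem nucleusCon_mul_left_comm (x y z : Q) : nucleusCon Q (x * (y * z)) (y * (x * z)) := by
  rw [← mul_left_conj]
  exact (nucleusCon Q).mul (nucleusCon_left_conj x y) ((nucleusCon Q).refl _)

theorem nucleusCon_mul_assoc (x y z : Q) : nucleusCon Q (x * y * z) (x * (y * z)) := by
  have hcomm : nucleusCon Q (x * (z * y)) (x * (y * z)) :=
    (nucleusCon Q).mul ((nucleusCon Q).refl x) (nucleusCon_mul_comm z y)
  exact (nucleusCon Q).trans (nucleusCon_mul_comm _ _)
    ((nucleusCon Q).trans (nucleusCon_mul_left_comm _ _ _) hcomm)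

end Quotient

section CenterAction

/-- The action of a loop element on the center of the nucleus by conjugation. -/
def centerConj (x : Q) : nucleusCenter Q ≃* nucleusCenter Q :=
  Subgroup.centerCongr (nucleusConj x)

theorem mul_centerConj (x : Q) (a : nucleusCenter Q) : x * (centerConj x a : Q) = (a : Q) * x :=
  mul_nucleusConj x a

theorem centerConj_eq {x : Q} {a b : nucleusCenter Q} (h : (a : Q) * x = x * (b : Q)) :
    centerConj x a = b := by
  ext
  exact mul_left_cancel ((mul_centerConj x a).trans h)

theorem centerConj_mul (x y : Q) (a : nucleusCenter Q) :
    centerConj (x * y) a = centerConj y (centerConj x a) := by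
  apply centerConj_eq
  rw [← nucleus_mul_assoc_left, ← mul_centerConj, nucleus_mul_assoc_mid, ← mul_centerConj,
    nucleus_mul_assoc_right]

theorem centerConj_nucleus (n : nucleusSubmonoid Q) (a : nucleusCenter Q) :
    centerConj (n : Q) a = a :=
  centerConj_eq (congrArg Subtype.val (Subgroup.mem_center_iff.1 a.2 n).symm)

theorem centerConj_comm (x y : Q) (a : nucleusCenter Q) :
    centerConj x (centerConj y a) = centerConj y (centerConj x a) := by
  obtain ⟨n, hn⟩ := nucleusCon_mul_comm x y
  rw [← centerConj_mul, ← centerConj_mul, hn, centerConj_mul _ (n : Q), centerConj_nucleus]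

end CenterAction

section Associator

theorem leftInner_mul (x y z w : Q) :
    leftInner x y (z * w) = leftInner x y z * leftInner x y w := by
  have autotopism := mul_mem (inv_mem (lcc_autotopism (x * y)))
    (mul_mem (lcc_autotopism x) (lcc_autotopism y))
  have fix_one : leftInner x y 1 = 1 := by simp [leftInner]
  simp only [Prod.mk_mul_mk, Prod.inv_mk] at autotopism
  rw [autotopism_fst_eq_thd autotopism fix_one] at autotopism
  exact (autotopism z w).symm

theorem exists_leftInner_eq_mul_nucleus (x y z : Q) :
    ∃ n : nucleusSubmonoid Q, leftInner x y z = z * n := by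
  obtain ⟨n, hn⟩ := (nucleusCon Q).symm (nucleusCon_mul_assoc x y z)
  refine ⟨n, mul_left_cancel (a := x * y) ?_⟩
  rw [mul_leftInner, hn, nucleus_mul_assoc_right]

theorem mem_center_of_leftInner_eq {x y z : Q} {n : nucleusSubmonoid Q}
    (h : leftInner x y z = z * n) : n ∈ nucleusCenter Q := by
  refine Subgroup.mem_center_iff.2 fun m => Subtype.ext (mul_left_cancel (a := z) ?_)
  have on_left := leftInner_mul x y ((nucleusConj z).symm m) z
  have on_right := leftInner_mul x y z m
  rw [leftInner_nucleus, h] at on_left on_right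
  rw [nucleusConj_symm_mul, on_right, ← nucleus_mul_assoc_left, nucleusConj_symm_mul,
    nucleus_mul_assoc_mid, nucleus_mul_assoc_mid] at on_left
  exact on_left.symm

theorem exists_center_leftInner_eq_mul (x y z : Q) :
    ∃ a : nucleusCenter Q, leftInner x y z = z * (a : Q) :=
  let ⟨n, hn⟩ := exists_leftInner_eq_mul_nucleus x y z
  ⟨⟨n, mem_center_of_leftInner_eq hn⟩, hn⟩

/-- The associator of `x`, `y`, `z`: the element `a` of the center of the nucleus with
`x * (y * z) = x * y * z * a`. -/
noncomputable def associator (x y z : Q) : nucleusCenter Q :=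
  (exists_center_leftInner_eq_mul x y z).choose

theorem leftInner_eq_mul_associator (x y z : Q) :
    leftInner x y z = z * (associator x y z : Q) :=
  (exists_center_leftInner_eq_mul x y z).choose_spec

theorem mul_associator (x y z : Q) : x * y * z * (associator x y z : Q) = x * (y * z) := by
  rw [nucleus_mul_assoc_right, ← leftInner_eq_mul_associator, mul_leftInner]

theorem associator_eq {x y z : Q} {a : nucleusCenter Q}
    (h : x * (y * z) = x * y * z * (a : Q)) : associator x y z = a := by
  ext
  exact mul_left_cancel ((mul_associator x y z).trans h)

theorem associator_mul_right (x y z w : Q) :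
    associator x y (z * w) = centerConj w (associator x y z) * associator x y w := by
  ext
  apply mul_left_cancel (a := z * w)
  rw [← leftInner_eq_mul_associator, leftInner_mul, leftInner_eq_mul_associator,
    leftInner_eq_mul_associator, nucleus_mul_assoc_mid, ← nucleus_mul_assoc_left,
    ← mul_centerConj, nucleus_mul_assoc_mid, Subgroup.coe_mul, ← Submonoid.coe_mul,
    nucleus_mul_assoc_right]

theorem associator_nucleus_right (x y : Q) (n : nucleusSubmonoid Q) : associator x y n = 1 := by
  apply associator_eq
  simp [nucleus_mul_assoc_right]

theorem associator_congr_right (x y : Q) {z w : Q} (h : nucleusCon Q z w) :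
    associator x y z = associator x y w := by
  obtain ⟨n, rfl⟩ := h
  rw [associator_mul_right, associator_nucleus_right, centerConj_nucleus, mul_one]

theorem nucleusCon_right_conj (x z : Q) : nucleusCon Q (x ⧵ (z * x)) z := by
  obtain ⟨n, hn⟩ := nucleusCon_mul_comm z x
  exact ⟨n, by rw [hn, nucleus_mul_assoc_right, ldiv_mul]⟩

theorem associator_swap_right (x y z : Q) : associator x y z = associator x z y := by
  rw [← associator_congr_right x z (nucleusCon_right_conj z y)]
  apply associator_eq
  rw [← mul_right_conj z, mul_associator, mul_ldiv]

theorem associator_swap_left (x y z : Q) : associator x y z = associator y x z := by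
  rw [associator_swap_right y, ← associator_congr_right y z (nucleusCon_right_conj y x),
    associator_swap_right y]
  have h := mul_associator y (y ⧵ (x * y)) z
  rw [mul_ldiv, ← mul_left_conj, mul_ldiv, mul_rdiv] at h
  exact associator_eq h.symm

theorem mem_nucleus_of_associator_eq_one {a : Q} (h : ∀ x y, associator x y a = 1) :
    a ∈ nucleusSubmonoid Q :=
  mem_nucleus_iff_right_autotopism.2 fun x y => by simpa [h] using (mul_associator x y a).symm

end Associator

end CCLoop

/-- The laws satisfied by the associator of a conjugacy closed loop, written additively: `α` is
symmetric and in each variable a crossed homomorphism with respect to the commuting automorphisms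
`T x`, and it is unchanged when the factors of a product are swapped. -/
structure IsSymmetricTricocycle {Q M : Type*} [MulOneClass Q] [AddCommGroup M]
    (T : Q → M ≃+ M) (α : Q → Q → Q → M) : Prop where
  act_comm : ∀ x y m, T x (T y m) = T y (T x m)
  swap_left : ∀ x y z, α x y z = α y x z
  swap_right : ∀ x y z, α x y z = α x z y
  map_mul_right : ∀ x y z w, α x y (z * w) = T w (α x y z) + α x y w
  map_mul_comm : ∀ x y z w, α x y (z * w) = α x y (w * z)

namespace IsSymmetricTricocycle

variable {Q M : Type*} [MulOneClass Q] [AddCommGroup M] {T : Q → M ≃+ M} {α : Q → Q → Q → M}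

theorem map_mul_mid (h : IsSymmetricTricocycle T α) (x y z w : Q) :
    α x (y * z) w = T z (α x y w) + α x z w := by
  rw [h.swap_right, h.map_mul_right, h.swap_right x w y, h.swap_right x w z]

theorem map_mul_left (h : IsSymmetricTricocycle T α) (x y z w : Q) :
    α (x * y) z w = T y (α x z w) + α y z w := by
  rw [h.swap_left, h.map_mul_mid, h.swap_left z x, h.swap_left z y]

theorem map_one_right (h : IsSymmetricTricocycle T α) (x y : Q) : α x y 1 = 0 := by
  simpa using h.map_mul_right x y 1 1

theorem act_sub_comm (h : IsSymmetricTricocycle T α) (x y z w : Q) :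
    T w (α x y z) - α x y z = T z (α x y w) - α x y w := by
  have comm := h.map_mul_comm x y z w
  rw [h.map_mul_right, h.map_mul_right] at comm
  rw [sub_eq_sub_iff_add_eq_add, comm, add_comm]

theorem act_fix (h : IsSymmetricTricocycle T α) (diag : ∀ x, α x x x = 0)
    (x y : Q) : T y (α x y y) = α x y y := by
  have sub_comm := h.act_sub_comm y y x y
  rw [diag, map_zero, sub_zero, h.swap_right, h.swap_left] at sub_comm
  exact sub_eq_zero.1 sub_comm

theorem three_smul_add_eq_zero (h : IsSymmetricTricocycle T α) (diag : ∀ x, α x x x = 0)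
    (x y : Q) : 3 • (α x x y + α x y y) = 0 := by
  have expansion : α (x * y) (x * y) (x * y) = T y (T y (3 • (α x x y + α x y y))) := by
    have hyxx : α y x x = α x x y := by rw [h.swap_left, h.swap_right]
    have hyyx : α y y x = α x y y := by rw [h.swap_right, h.swap_left]
    simp only [h.map_mul_left, h.map_mul_mid, h.map_mul_right, diag, h.swap_right x y x,
      h.swap_left y x y, hyxx, hyyx, map_add, map_zero, map_nsmul, h.act_fix diag]
    module
  rw [diag] at expansion
  exact (T y).map_eq_zero_iff.1 ((T y).map_eq_zero_iff.1 expansion.symm)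

theorem six_smul_eq_zero (h : IsSymmetricTricocycle T α) (diag : ∀ x, α x x x = 0)
    (x y : Q) : 6 • α x y y = 0 := by
  have for_y := h.three_smul_add_eq_zero diag x y
  have for_sq := h.three_smul_add_eq_zero diag x (y * y)
  have act_for_y := congrArg (T y) for_y
  simp only [h.map_mul_mid, h.map_mul_right, map_add, map_nsmul, map_zero, h.act_fix diag]
    at for_sq act_for_y
  linear_combination (norm := module) for_sq - act_for_y - for_y

theorem twelve_smul_eq_zero (h : IsSymmetricTricocycle T α) (diag : ∀ x, α x x x = 0)
    (x y z : Q) : 12 • α x y z = 0 := by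
  have expansion : α x (y * z) (y * z) = T z (T z (α x y y)) + 2 • T z (α x y z) + α x z z := by
    rw [h.map_mul_mid, h.map_mul_right, h.map_mul_right, h.swap_right x z y, map_add]
    abel
  have polarization := congrArg (6 • ·) expansion
  have kill := h.six_smul_eq_zero diag x
  simp only [smul_add, ← map_nsmul, kill, map_zero, zero_add, add_zero, smul_smul] at polarization
  exact (T z).map_eq_zero_iff.1 polarization.symm

theorem six_smul_act_sub_eq_zero (h : IsSymmetricTricocycle T α) (diag : ∀ x, α x x x = 0)
    (x y z : Q) : 6 • (T x (α y z x) - α y z x) = 0 := by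
  rw [h.swap_right y z x, h.act_sub_comm, smul_sub, ← map_nsmul, h.six_smul_eq_zero diag,
    map_zero, sub_zero]

theorem act_act_sub (h : IsSymmetricTricocycle T α) (diag : ∀ x, α x x x = 0)
    (x y z : Q) : T x (T x (α y z x) - α y z x) = T x (α y z x) - α y z x := by
  rw [h.swap_right y z x, h.act_sub_comm, map_sub, h.act_comm, h.act_fix diag]

theorem map_lpow (h : IsSymmetricTricocycle T α) (diag : ∀ x, α x x x = 0)
    (x y z : Q) (n : ℕ) : α y z (lpow (· * ·) 1 x n) =
    n • α y z x + n.choose 2 • (T x (α y z x) - α y z x) := by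
  induction n with
  | zero => simp [lpow, h.map_one_right]
  | succ n ih =>
    rw [lpow, h.map_mul_comm, h.map_mul_right, ih, map_add, map_nsmul, map_nsmul,
      h.act_act_sub diag, Nat.choose_succ_succ' n 1, Nat.choose_one_right]
    module

theorem map_lpow_twelve (h : IsSymmetricTricocycle T α) (diag : ∀ x, α x x x = 0)
    (x y z : Q) : α y z (lpow (· * ·) 1 x 12) = 0 := by
  rw [h.map_lpow diag, h.twelve_smul_eq_zero diag, show Nat.choose 12 2 = 11 * 6 by decide,
    mul_smul, h.six_smul_act_sub_eq_zero diag, smul_zero, add_zero]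

end IsSymmetricTricocycle

namespace CCLoop

open scoped IsMulCommutative

variable {Q : Type*} [Loop Q] [CCLoop Q]

theorem isSymmetricTricocycle_associator :
    IsSymmetricTricocycle (fun x : Q => (centerConj x).toAdditive)
      (fun x y z => Additive.ofMul (associator x y z)) where
  act_comm := centerConj_comm
  swap_left := associator_swap_left
  swap_right := associator_swap_right
  map_mul_right := associator_mul_right
  map_mul_comm x y z w := associator_congr_right x y (nucleusCon_mul_comm z w)

theorem lpow_twelve_mem_nucleus (hcube : ∀ x : Q, x * (x * x) = x * x * x) (x : Q) :
    lpow (· * ·) 1 x 12 ∈ nucleusSubmonoid Q := by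
  have diag (y : Q) : associator y y y = 1 := associator_eq (by simp [hcube])
  exact mem_nucleus_of_associator_eq_one
    (isSymmetricTricocycle_associator.map_lpow_twelve diag x)

end CCLoop

theorem mem_genSubloop1_self {Q : Type*} (mul ld rd : Q → Q → Q) (e a : Q) :
    a ∈ genSubloop1 mul ld rd e a :=
  Set.mem_sInter.2 fun _ hT => hT.1

theorem pacc_loop_mod_nucleus_exponent_twelve_general (Q : Type*) (mul ld rd : Q → Q → Q) (e : Q)
    (hQ1 : ∀ x y, ld x (mul x y) = y) (hQ2 : ∀ x y, mul x (ld x y) = y)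
    (hQ3 : ∀ x y, rd (mul x y) y = x) (hQ4 : ∀ x y, mul (rd x y) y = x)
    (hL : ∀ x, mul e x = x) (hR : ∀ x, mul x e = x)
    (hcube : ∀ x, mul x (mul x x) = mul (mul x x) x)
    (hCCL : ∀ x y, ∃ z, ∀ u, ld x (mul y (mul x u)) = mul z u)
    (hCCR : ∀ x y, ∃ w, ∀ u, rd (mul (mul u x) y) x = mul u w) :
    (∀ x y, ∃ n ∈ nucleus mul, mul x y = mul (mul y x) n) ∧
    (∀ x y z, ∃ n ∈ nucleus mul, mul (mul x y) z = mul (mul x (mul y z)) n) ∧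
    (∀ x, lpow mul e x 12 ∈ nucleus mul) := by
  let _ : Loop Q :=
    { mul := mul, one := e, div := rd, ldiv := ld, one_mul := hL, mul_one := hR
      ldiv_mul := hQ1, mul_ldiv := hQ2, mul_rdiv := hQ3, rdiv_mul := hQ4 }
  have _ : CCLoop Q := ⟨hCCL, hCCR⟩
  refine ⟨fun x y => ?_, fun x y z => ?_, CCLoop.lpow_twelve_mem_nucleus hcube⟩
  · obtain ⟨n, hn⟩ := CCLoop.nucleusCon_mul_comm x y
    exact ⟨n, n.2, hn⟩
  · obtain ⟨n, hn⟩ := CCLoop.nucleusCon_mul_assoc x y z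
    exact ⟨n, n.2, hn⟩

/-- if `Q` is a power-associative conjugacy closed loop, then
`Q/N(Q)` is an abelian group of exponent dividing 12: modulo the nucleus, `mul`
is commutative and associative, and every twelfth power lies in the nucleus. -/
theorem pacc_loop_mod_nucleus_exponent_twelve (Q : Type*) (mul ld rd : Q → Q → Q) (e : Q)
    (hQ1 : ∀ x y, ld x (mul x y) = y) (hQ2 : ∀ x y, mul x (ld x y) = y)
    (hQ3 : ∀ x y, rd (mul x y) y = x) (hQ4 : ∀ x y, mul (rd x y) y = x)
    (hL : ∀ x, mul e x = x) (hR : ∀ x, mul x e = x)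
    -- power-associativity: every 1-generated subloop is associative (a group)
    (hPA : ∀ a : Q, ∀ x ∈ genSubloop1 mul ld rd e a, ∀ y ∈ genSubloop1 mul ld rd e a,
      ∀ z ∈ genSubloop1 mul ld rd e a, mul x (mul y z) = mul (mul x y) z)
    -- conjugacy closedness
    (hCCL : ∀ x y, ∃ z, ∀ u, ld x (mul y (mul x u)) = mul z u)
    (hCCR : ∀ x y, ∃ w, ∀ u, rd (mul (mul u x) y) x = mul u w) :
    (∀ x y, ∃ n ∈ nucleus mul, mul x y = mul (mul y x) n) ∧
    (∀ x y z, ∃ n ∈ nucleus mul, mul (mul x y) z = mul (mul x (mul y z)) n) ∧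
    (∀ x, lpow mul e x 12 ∈ nucleus mul) := by
  have hself (a : Q) := mem_genSubloop1_self mul ld rd e a
  exact pacc_loop_mod_nucleus_exponent_twelve_general Q mul ld rd e hQ1 hQ2 hQ3 hQ4 hL hR
    (fun x => hPA x x (hself x) x (hself x) x (hself x)) hCCL hCCR
end
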